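/- arXiv:1601.05702 — 2 statements merged into one kernel-verified Lean document; each statement's English description precedes it below -/
import Mathlib

section
/- Let θ₀ = (γ₀, μ₀, σ₀) with γ₀ > −1/2, μ₀ ∈ ℝ, σ₀ > 0. Then the three-parameter GEV family is differentiable in quadratic mean at θ₀: with ℓ̇_{θ₀}(x) defined as the gradient (∂_γ ℓ_θ(x), ∂_μ ℓ_θ(x), ∂_σ ℓ_θ(x)) at θ = θ₀ for x with σ₀ + γ₀(x − μ₀) > 0 and as 0 otherwise, one has ∫_ℝ (√p_{θ₀+h}(x) − √p_{θ₀}(x) − ½ hᵀ ℓ̇_{θ₀}(x) √p_{θ₀}(x))² dx = o(‖h‖²) as h → 0 in ℝ³. -/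
open MeasureTheory Filter Set Asymptotics Matrix

/-- `u_γ(z)` for the GEV family. -/
noncomputable def gevU (γ z : ℝ) : ℝ :=
  if γ = 0 then Real.exp (-z) else (1 + γ * z) ^ (-γ⁻¹)

/-- Lebesgue density of the GEV distribution with parameter `θ = (γ, μ, σ)`. -/
noncomputable def gevDensity (θ : ℝ × ℝ × ℝ) (x : ℝ) : ℝ :=
  if 0 < θ.2.2 + θ.1 * (x - θ.2.1) then
    (θ.2.2)⁻¹ * Real.exp (-(gevU θ.1 ((x - θ.2.1) / θ.2.2))) *
      gevU θ.1 ((x - θ.2.1) / θ.2.2) ^ (θ.1 + 1)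
  else 0

/-- `D(γ, z) = ∫₀^z t / (1 + γ t)² dt = ∂_γ log u_γ(z)`. -/
noncomputable def gevDGamma (γ z : ℝ) : ℝ := ∫ t in (0:ℝ)..z, t / (1 + γ * t) ^ 2

/-- `∂_γ ℓ_θ(x)` on the support. -/
noncomputable def gevScoreGamma (θ : ℝ × ℝ × ℝ) (x : ℝ) : ℝ :=
  (1 - gevU θ.1 ((x - θ.2.1) / θ.2.2)) * gevDGamma θ.1 ((x - θ.2.1) / θ.2.2)
    - ((x - θ.2.1) / θ.2.2) / (1 + θ.1 * ((x - θ.2.1) / θ.2.2))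

/-- `∂_μ ℓ_θ(x)` on the support. -/
noncomputable def gevScoreMu (θ : ℝ × ℝ × ℝ) (x : ℝ) : ℝ :=
  (θ.1 + 1 - gevU θ.1 ((x - θ.2.1) / θ.2.2))
    / (θ.2.2 * (1 + θ.1 * ((x - θ.2.1) / θ.2.2)))

/-- `∂_σ ℓ_θ(x)` on the support. -/
noncomputable def gevScoreSigma (θ : ℝ × ℝ × ℝ) (x : ℝ) : ℝ :=
  ((1 - gevU θ.1 ((x - θ.2.1) / θ.2.2)) * ((x - θ.2.1) / θ.2.2) - 1)
    / (θ.2.2 * (1 + θ.1 * ((x - θ.2.1) / θ.2.2)))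

/-- The GEV score vector `ℓ̇_θ(x)`, i.e. the gradient of `θ ↦ ℓ_θ(x)` on the support,
set to `0` off the support. -/
noncomputable def gevScore (θ : ℝ × ℝ × ℝ) (x : ℝ) : Fin 3 → ℝ :=
  if 0 < θ.2.2 + θ.1 * (x - θ.2.1) then
    ![gevScoreGamma θ x, gevScoreMu θ x, gevScoreSigma θ x]
  else 0

/-- Coordinates of a GEV parameter vector. -/
def toVec3 (θ : ℝ × ℝ × ℝ) : Fin 3 → ℝ := ![θ.1, θ.2.1, θ.2.2]


noncomputable def gPhi (v : ℝ) : ℝ := if v = 0 then 1 else Real.log (1 + v) / v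

noncomputable def gPhi' (v : ℝ) : ℝ :=
  if v = 0 then -(1/2) else (1 / (1 + v) - Real.log (1 + v) / v) / v

lemma gPhi_mul (v : ℝ) : v * gPhi v = Real.log (1 + v) := by
  unfold gPhi
  split_ifs with h
  · simp [h]
  · field_simp

lemma gPhi_rel (v : ℝ) : gPhi v + v * gPhi' v = 1 / (1 + v) := by
  unfold gPhi gPhi'
  split_ifs with h
  · simp [h]
  · field_simp
    ring

lemma gPhi_hasDerivAt (v : ℝ) (hv : 0 < 1 + v) : HasDerivAt gPhi (gPhi' v) v := by
  by_cases h : v = 0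
  · subst h
    have hO : (fun x : ℝ => gPhi x - gPhi 0 - (x - 0) • gPhi' 0) =O[nhds 0]
        fun x : ℝ => x ^ 2 := by
      apply Asymptotics.IsBigO.of_bound 2
      have : ∀ᶠ x : ℝ in nhds 0, |x| < 1/2 := by
        have := Metric.ball_mem_nhds (0:ℝ) (by norm_num : (0:ℝ) < 1/2)
        filter_upwards [this] with x hx
        simpa using hx
      filter_upwards [this] with x hx
      by_cases hx0 : x = 0
      · simp [hx0]
      have hb := Real.abs_log_sub_add_sum_range_le (x := -x) (by rw [abs_neg]; linarith) 2
      simp only [Finset.sum_range_succ, Finset.sum_range_zero, abs_neg] at hb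
      norm_num at hb
      have e : gPhi x - gPhi 0 - (x - 0) • gPhi' 0
          = (-x + x ^ 2 / 2 + Real.log (1 + x)) / x := by
        simp only [gPhi, gPhi', hx0, if_true, if_false, smul_eq_mul]
        field_simp
        ring
      rw [e, norm_div, Real.norm_eq_abs, Real.norm_eq_abs, Real.norm_eq_abs,
        div_le_iff₀ (by positivity)]
      refine hb.trans ?_
      rw [div_le_iff₀ (by linarith), abs_pow]
      have h0 : 0 ≤ |x| ^ 3 := by positivity
      nlinarith [abs_nonneg x]
    have ho : (fun x : ℝ => x ^ 2) =o[nhds 0] fun x : ℝ => x - 0 := by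
      simpa using isLittleO_pow_id (𝕜 := ℝ) (n := 2) (by norm_num)
    exact hasDerivAt_iff_isLittleO.mpr (hO.trans_isLittleO ho)
  · have h1 : HasDerivAt (fun x : ℝ => Real.log (1 + x) / x)
        ((1 / (1 + v) * v - Real.log (1 + v) * 1) / v ^ 2) v := by
      refine HasDerivAt.div ?_ (hasDerivAt_id v) h
      exact (((hasDerivAt_id v).const_add 1).log hv.ne')
    have h2 : gPhi' v = (1 / (1 + v) * v - Real.log (1 + v) * 1) / v ^ 2 := by
      simp only [gPhi', h, if_false]
      field_simp
    rw [h2]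
    refine h1.congr_of_eventuallyEq ?_
    filter_upwards [isOpen_ne.mem_nhds h] with x hx
    simp only [gPhi]
    rw [if_neg hx]

noncomputable def gY (γ z : ℝ) : ℝ := z * gPhi (γ * z)

lemma gY_mul (γ z : ℝ) : γ * gY γ z = Real.log (1 + γ * z) := by
  rw [← gPhi_mul]; unfold gY; ring

lemma exp_gY (γ z : ℝ) (h : 0 < 1 + γ * z) : Real.exp (γ * gY γ z) = 1 + γ * z := by
  rw [gY_mul, Real.exp_log h]

lemma gevU_eq (γ z : ℝ) (h : 0 < 1 + γ * z) : gevU γ z = Real.exp (-gY γ z) := by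
  unfold gevU
  split_ifs with hγ
  · simp [gY, hγ, gPhi]
  · rw [Real.rpow_def_of_pos h, ← gY_mul]
    congr 1
    field_simp

lemma gevDGamma_eq (γ z : ℝ) (h : 0 < 1 + γ * z) :
    gevDGamma γ z = - z ^ 2 * gPhi' (γ * z) := by
  unfold gevDGamma
  by_cases hγ : γ = 0
  · subst hγ
    simp [gPhi', integral_id]
    ring
  have hpos : ∀ t ∈ uIcc 0 z, 0 < 1 + γ * t := by
    intro t ht
    rcases le_total 0 z with hz | hz
    · rw [uIcc_of_le hz] at ht
      rcases le_total 0 γ with hg | hg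
      · nlinarith [mul_nonneg hg ht.1]
      · nlinarith [mul_le_mul_of_nonpos_left ht.2 hg]
    · rw [uIcc_of_ge hz] at ht
      rcases le_total 0 γ with hg | hg
      · nlinarith [mul_le_mul_of_nonneg_left ht.1 hg]
      · nlinarith [mul_nonneg_of_nonpos_of_nonpos hg ht.2]
  have hd : ∀ t ∈ uIcc 0 z, HasDerivAt
      (fun t => Real.log (1 + γ * t) / γ ^ 2 - t / (γ * (1 + γ * t))) (t / (1 + γ * t) ^ 2) t := by
    intro t ht
    have hp := hpos t ht
    have h0 : HasDerivAt (fun t => 1 + γ * t) γ t := by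
      simpa using ((hasDerivAt_id t).const_mul γ).const_add 1
    have h1 := (h0.log hp.ne').div_const (γ ^ 2)
    have h2 := (hasDerivAt_id t).div (h0.const_mul γ) (mul_ne_zero hγ hp.ne')
    refine (h1.sub h2).congr_deriv ?_
    have := hp.ne'
    simp only [id]
    field_simp
    ring
  rw [intervalIntegral.integral_eq_sub_of_hasDerivAt hd]
  · by_cases hz : z = 0
    · simp [hz]
    simp only [gPhi', mul_eq_zero, hγ, hz, or_self, if_false]
    have := h.ne'
    field_simp
    simp
  · apply ContinuousOn.intervalIntegrable
    apply ContinuousOn.div continuousOn_id (by fun_prop)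
    intro t ht
    exact pow_ne_zero _ (hpos t ht).ne'

/-- log density -/
noncomputable def gEll (θ : ℝ × ℝ × ℝ) (x : ℝ) : ℝ :=
  - Real.log θ.2.2 - Real.exp (-gY θ.1 ((x - θ.2.1) / θ.2.2))
    - (θ.1 + 1) * gY θ.1 ((x - θ.2.1) / θ.2.2)

def gW (θ : ℝ × ℝ × ℝ) (x : ℝ) : ℝ := θ.2.2 + θ.1 * (x - θ.2.1)

noncomputable def gS (θ : ℝ × ℝ × ℝ) (x : ℝ) : ℝ := Real.sqrt (gevDensity θ x)

lemma gW_div (θ : ℝ × ℝ × ℝ) (x : ℝ) (hσ : 0 < θ.2.2) :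
    1 + θ.1 * ((x - θ.2.1) / θ.2.2) = gW θ x / θ.2.2 := by
  unfold gW; field_simp

lemma gW_div_pos (θ : ℝ × ℝ × ℝ) (x : ℝ) (hσ : 0 < θ.2.2) (hW : 0 < gW θ x) :
    0 < 1 + θ.1 * ((x - θ.2.1) / θ.2.2) := by
  rw [gW_div θ x hσ]; positivity

lemma gevDensity_eq (θ : ℝ × ℝ × ℝ) (x : ℝ) (hσ : 0 < θ.2.2) (hW : 0 < gW θ x) :
    gevDensity θ x = Real.exp (gEll θ x) := by
  have hW' : 0 < θ.2.2 + θ.1 * (x - θ.2.1) := hW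
  unfold gevDensity gEll
  rw [if_pos hW', gevU_eq _ _ (gW_div_pos θ x hσ hW), ← Real.exp_mul, ← Real.exp_log (inv_pos.2 hσ),
    ← Real.exp_add, ← Real.exp_add, Real.log_inv]
  congr 1
  simp
  ring

lemma gS_eq (θ : ℝ × ℝ × ℝ) (x : ℝ) (hσ : 0 < θ.2.2) (hW : 0 < gW θ x) :
    gS θ x = Real.exp (gEll θ x / 2) := by
  rw [gS, gevDensity_eq θ x hσ hW, Real.exp_half]

lemma gS_eq_zero (θ : ℝ × ℝ × ℝ) (x : ℝ) (hW : gW θ x ≤ 0) : gS θ x = 0 := by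
  have hW' : ¬ 0 < θ.2.2 + θ.1 * (x - θ.2.1) := not_lt.2 hW
  unfold gS gevDensity
  rw [if_neg hW', Real.sqrt_zero]

lemma gW_continuous (x : ℝ) : Continuous fun θ => gW θ x := by
  unfold gW; fun_prop

noncomputable def gDer (θ : ℝ × ℝ × ℝ) (x : ℝ) : (ℝ × ℝ × ℝ) →L[ℝ] ℝ :=
  gevScore θ x 0 • ContinuousLinearMap.fst ℝ ℝ (ℝ × ℝ)
  + gevScore θ x 1 • ((ContinuousLinearMap.fst ℝ ℝ ℝ).comp (ContinuousLinearMap.snd ℝ ℝ (ℝ × ℝ)))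
  + gevScore θ x 2 • ((ContinuousLinearMap.snd ℝ ℝ ℝ).comp (ContinuousLinearMap.snd ℝ ℝ (ℝ × ℝ)))

lemma gEll_hasFDerivAt (θ : ℝ × ℝ × ℝ) (x : ℝ) (hσ : 0 < θ.2.2) (hW : 0 < gW θ x) :
    HasFDerivAt (fun θ => gEll θ x) (gDer θ x) θ := by
  have hp := gW_div_pos θ x hσ hW
  have hg : HasFDerivAt (fun θ : ℝ × ℝ × ℝ => θ.1) (ContinuousLinearMap.fst ℝ ℝ (ℝ × ℝ)) θ :=
    hasFDerivAt_fst
  have hm : HasFDerivAt (fun θ : ℝ × ℝ × ℝ => θ.2.1)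
    ((ContinuousLinearMap.fst ℝ ℝ ℝ).comp (ContinuousLinearMap.snd ℝ ℝ (ℝ × ℝ))) θ :=
    hasFDerivAt_fst.comp θ hasFDerivAt_snd
  have hs : HasFDerivAt (fun θ : ℝ × ℝ × ℝ => θ.2.2)
    ((ContinuousLinearMap.snd ℝ ℝ ℝ).comp (ContinuousLinearMap.snd ℝ ℝ (ℝ × ℝ))) θ :=
    hasFDerivAt_snd.comp θ hasFDerivAt_snd
  have hi := (hasDerivAt_inv hσ.ne').comp_hasFDerivAt θ hs
  have hz := (hm.const_sub x).mul hi
  have hv := hg.mul hz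
  have hph := HasDerivAt.comp_hasFDerivAt θ (f := fun θ : ℝ × ℝ × ℝ => θ.1 * ((x - θ.2.1) * (θ.2.2)⁻¹))
     (gPhi_hasDerivAt _ (by simpa [div_eq_mul_inv] using hp)) hv
  have hy := hz.mul hph
  have hl := ((hs.log hσ.ne').neg.sub hy.neg.exp).sub ((hg.add_const 1).mul hy)
  have hu := gevU_eq _ _ hp
  have hD := gevDGamma_eq _ _ hp
  have hr := gPhi_rel (θ.1 * ((x - θ.2.1) / θ.2.2))
  have hW' : 0 < θ.2.2 + θ.1 * (x - θ.2.1) := hW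
  refine (hl.congr_fderiv ?_).congr_of_eventuallyEq (Eventually.of_forall fun θ' => ?_)
  swap
  · simp [gEll, gY, div_eq_mul_inv]
  · obtain ⟨γ, μ, σ⟩ := θ
    simp only at *
    set z := (x - μ) / σ with hz
    have e1 : (x - μ) * σ⁻¹ = z := by rw [hz, div_eq_mul_inv]
    have e2 : x - μ = z * σ := by rw [hz]; field_simp
    clear hl hy hph hv hi hs hm hg
    ext
    all_goals
      simp [gDer, gevScore, hW', gevScoreGamma, gevScoreMu, gevScoreSigma, ← hz, hu, hD, e1, gY]
      generalize Real.exp (-(z * gPhi (γ * z))) = E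
      have hP : gPhi (γ * z) = 1 / (1 + γ * z) - γ * z * gPhi' (γ * z) := by linarith
      rw [hP]
      generalize gPhi' (γ * z) = P
      try rw [e2]
      clear_value z
      have := hp.ne'
      have := hσ.ne'
      field_simp
      ring

noncomputable def gSD (θ : ℝ × ℝ × ℝ) (x : ℝ) : (ℝ × ℝ × ℝ) →L[ℝ] ℝ := (gS θ x / 2) • gDer θ x

lemma gS_hasFDerivAt (θ : ℝ × ℝ × ℝ) (x : ℝ) (hσ : 0 < θ.2.2) (hW : 0 < gW θ x) :
    HasFDerivAt (fun θ => gS θ x) (gSD θ x) θ := by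
  have h := ((gEll_hasFDerivAt θ x hσ hW).mul_const (1/2)).exp
  have e : ∀ᶠ θ' in nhds θ, gS θ' x = Real.exp (gEll θ' x * (1/2)) := by
    have h1 : ∀ᶠ θ' in nhds θ, 0 < gW θ' x :=
      (gW_continuous x).continuousAt.eventually (lt_mem_nhds hW)
    have h2 : ∀ᶠ θ' : ℝ × ℝ × ℝ in nhds θ, 0 < θ'.2.2 :=
      (continuous_snd.snd.continuousAt).eventually (lt_mem_nhds hσ)
    filter_upwards [h1, h2] with θ' h1 h2
    rw [gS_eq θ' x h2 h1]; congr 1; ring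
  refine (h.congr_of_eventuallyEq e).congr_fderiv ?_
  rw [gSD, gS_eq θ x hσ hW, smul_smul]
  congr 1
  ring_nf

lemma gS_hasFDerivAt_neg (θ : ℝ × ℝ × ℝ) (x : ℝ) (hW : gW θ x < 0) :
    HasFDerivAt (fun θ => gS θ x) (gSD θ x) θ := by
  have e : ∀ᶠ θ' in nhds θ, gS θ' x = 0 := by
    have h1 : ∀ᶠ θ' in nhds θ, gW θ' x < 0 :=
      (gW_continuous x).continuousAt.eventually (gt_mem_nhds hW)
    filter_upwards [h1] with θ' h1
    exact gS_eq_zero _ _ h1.le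
  refine ((hasFDerivAt_const (0:ℝ) θ).congr_of_eventuallyEq e).congr_fderiv ?_
  rw [gSD, gS_eq_zero θ x hW.le]
  simp

noncomputable def gA (γ y : ℝ) : ℝ :=
  (1 + Real.exp (-y)) * (1 + y ^ 2) * (1 + Real.exp (-(γ * y))) *
    Real.exp (-((γ + 1) * y / 2) - Real.exp (-y) / 2)

lemma one_sub_exp_bound (L : ℝ) : |1 - Real.exp (-L)| ≤ |L| * (1 + Real.exp (-L)) := by
  have h1 := Real.add_one_le_exp (-L)
  have h2 := Real.add_one_le_exp L
  have h3 : Real.exp L * Real.exp (-L) = 1 := by rw [← Real.exp_add]; simp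
  have h4 := Real.exp_pos (-L)
  rcases le_total 0 L with h | h
  · have : Real.exp (-L) ≤ 1 := Real.exp_le_one_iff.2 (by linarith)
    rw [abs_of_nonneg (by linarith), abs_of_nonneg h]
    nlinarith [mul_nonneg h h4.le]
  · have : 1 ≤ Real.exp (-L) := Real.one_le_exp (by linarith)
    rw [abs_of_nonpos (by linarith), abs_of_nonpos h]
    nlinarith [mul_le_mul_of_nonneg_right h2 h4.le]

lemma exp_second_bound (L : ℝ) :
    |L - (1 - Real.exp (-L))| ≤ L ^ 2 * (1 + Real.exp (-L)) := by
  have h1 := Real.add_one_le_exp (-L)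
  have h2 := Real.add_one_le_exp L
  have h3 : Real.exp L * Real.exp (-L) = 1 := by rw [← Real.exp_add]; simp
  have h4 := Real.exp_pos (-L)
  have h5 : 1 - Real.exp (-L) ≥ L * Real.exp (-L) := by
    nlinarith [mul_le_mul_of_nonneg_right h2 h4.le]
  rw [abs_of_nonneg (by linarith)]
  have h6 := one_sub_exp_bound L
  have h7 : L - (1 - Real.exp (-L)) ≤ L * (1 - Real.exp (-L)) := by linarith
  refine h7.trans ((le_abs_self _).trans ?_)
  rw [abs_mul, ← sq_abs L, sq, mul_assoc]
  exact mul_le_mul_of_nonneg_left h6 (abs_nonneg _)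

lemma z_div_bound (γ z : ℝ) (h : 0 < 1 + γ * z) :
    |z / (1 + γ * z)| ≤ |gY γ z| * (1 + Real.exp (-(γ * gY γ z))) := by
  by_cases hγ : γ = 0
  · subst hγ
    simp [gY, gPhi]
    nlinarith [abs_nonneg z]
  have hb := one_sub_exp_bound (γ * gY γ z)
  have hE : Real.exp (-(γ * gY γ z)) = (1 + γ * z)⁻¹ := by
    rw [Real.exp_neg, exp_gY _ _ h]
  have e : z / (1 + γ * z) = (1 - Real.exp (-(γ * gY γ z))) / γ := by
    rw [hE]
    have hq := mul_inv_cancel₀ h.ne'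
    rw [eq_div_iff hγ, div_eq_mul_inv]
    linear_combination hq
  rw [e, abs_div, div_le_iff₀ (abs_pos.2 hγ)]
  rw [abs_mul] at hb
  linarith

lemma D_bound (γ z : ℝ) (h : 0 < 1 + γ * z) :
    |gevDGamma γ z| ≤ gY γ z ^ 2 * (1 + Real.exp (-(γ * gY γ z))) := by
  rw [gevDGamma_eq γ z h]
  by_cases hγ : γ = 0
  · subst hγ
    simp [gY, gPhi, gPhi', abs_mul]
    nlinarith [sq_nonneg z]
  have hr := gPhi_rel (γ * z)
  have hb := exp_second_bound (γ * gY γ z)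
  have hE : Real.exp (-(γ * gY γ z)) = (1 + γ * z)⁻¹ := by
    rw [Real.exp_neg, exp_gY _ _ h]
  have e : - z ^ 2 * gPhi' (γ * z)
      = (γ * gY γ z - (1 - Real.exp (-(γ * gY γ z)))) / γ ^ 2 := by
    have hP : gPhi (γ * z) = 1 / (1 + γ * z) - γ * z * gPhi' (γ * z) := by linarith
    have hq := mul_inv_cancel₀ h.ne'
    rw [hE, gY, hP, eq_div_iff (by positivity)]
    linear_combination - hq
  rw [e, abs_div, abs_of_pos (by positivity : 0 < γ ^ 2), div_le_iff₀ (by positivity)]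
  linarith

lemma gDer_norm (θ : ℝ × ℝ × ℝ) (x : ℝ) :
    ‖gDer θ x‖ ≤ |gevScore θ x 0| + |gevScore θ x 1| + |gevScore θ x 2| := by
  refine ContinuousLinearMap.opNorm_le_bound _ (by positivity) fun h => ?_
  have h1 : |h.1| ≤ ‖h‖ := norm_fst_le h
  have h2 : |h.2.1| ≤ ‖h‖ := (norm_fst_le h.2).trans (norm_snd_le h)
  have h3 : |h.2.2| ≤ ‖h‖ := (norm_snd_le h.2).trans (norm_snd_le h)
  have e : gDer θ x h = gevScore θ x 0 * h.1 + gevScore θ x 1 * h.2.1 + gevScore θ x 2 * h.2.2 := by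
    simp [gDer]
  rw [e, Real.norm_eq_abs]
  refine (abs_add_three _ _ _).trans ?_
  rw [abs_mul, abs_mul, abs_mul]
  nlinarith [mul_le_mul_of_nonneg_left h1 (abs_nonneg (gevScore θ x 0)),
    mul_le_mul_of_nonneg_left h2 (abs_nonneg (gevScore θ x 1)),
    mul_le_mul_of_nonneg_left h3 (abs_nonneg (gevScore θ x 2))]

lemma gS_nonneg (θ : ℝ × ℝ × ℝ) (x : ℝ) : 0 ≤ gS θ x := Real.sqrt_nonneg _

lemma score_bound (θ : ℝ × ℝ × ℝ) (x : ℝ) (hσ : 0 < θ.2.2) (hW : 0 < gW θ x) :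
    ‖gDer θ x‖ ≤ (2 + (|θ.1| + 3) / θ.2.2) *
      ((1 + Real.exp (-gY θ.1 ((x - θ.2.1) / θ.2.2))) * (1 + gY θ.1 ((x - θ.2.1) / θ.2.2) ^ 2) *
        (1 + Real.exp (-(θ.1 * gY θ.1 ((x - θ.2.1) / θ.2.2))))) := by
  refine (gDer_norm θ x).trans ?_
  have hp := gW_div_pos θ x hσ hW
  have hu := gevU_eq _ _ hp
  have hD := D_bound _ _ hp
  have hz := z_div_bound _ _ hp
  have hE : Real.exp (-(θ.1 * gY θ.1 ((x - θ.2.1) / θ.2.2)))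
      = (1 + θ.1 * ((x - θ.2.1) / θ.2.2))⁻¹ := by
    rw [Real.exp_neg, exp_gY _ _ hp]
  have hW' : 0 < θ.2.2 + θ.1 * (x - θ.2.1) := hW
  have s0 : gevScore θ x 0 = gevScoreGamma θ x := by simp [gevScore, hW']
  have s1 : gevScore θ x 1 = gevScoreMu θ x := by simp [gevScore, hW']
  have s2 : gevScore θ x 2 = gevScoreSigma θ x := by simp [gevScore, hW']
  rw [s0, s1, s2, gevScoreGamma, gevScoreMu, gevScoreSigma, hu]
  generalize gevDGamma θ.1 ((x - θ.2.1) / θ.2.2) = D at *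
  generalize gY θ.1 ((x - θ.2.1) / θ.2.2) = Y at *
  generalize (x - θ.2.1) / θ.2.2 = z at *
  obtain ⟨γ, μ, σ⟩ := θ
  simp only at *
  have hM : 0 < Real.exp (-(γ * Y)) := Real.exp_pos _
  have hU : 0 < Real.exp (-Y) := Real.exp_pos _
  generalize Real.exp (-(γ * Y)) = M at *
  generalize Real.exp (-Y) = U at *
  have hY : |Y| ≤ 1 + Y ^ 2 := by
    rw [← sq_abs]; nlinarith [sq_nonneg (|Y| - 1), abs_nonneg Y]
  have hU1 : |1 - U| ≤ 1 + U := by rw [abs_le]; constructor <;> linarith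
  have hU2 : |γ + 1 - U| ≤ (|γ| + 1) * (1 + U) := by
    rw [abs_le]; constructor <;> nlinarith [neg_abs_le γ, le_abs_self γ, abs_nonneg γ]
  set T := (1 + U) * (1 + Y ^ 2) * (1 + M) with hT
  have hT1 : (1 + U) * (Y ^ 2 * (1 + M)) ≤ T := by
    rw [hT]; nlinarith [mul_pos (by linarith : 0 < 1 + U) (by linarith : 0 < 1 + M)]
  have hT2 : (1 + U) * (|Y| * (1 + M)) ≤ T := by
    rw [hT]; nlinarith [mul_pos (by linarith : 0 < 1 + U) (by linarith : 0 < 1 + M)]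
  have hT3 : (1 + U) * (1 + M) ≤ T := by
    rw [hT]; nlinarith [mul_pos (by linarith : 0 < 1 + U) (by linarith : 0 < 1 + M), sq_nonneg Y]
  have hT4 : |Y| * (1 + M) ≤ (1 + U) * (|Y| * (1 + M)) := by
    nlinarith [mul_nonneg (abs_nonneg Y) (by linarith : 0 ≤ 1 + M)]
  have b0 : |(1 - U) * D - z / (1 + γ * z)| ≤ 2 * T := by
    refine (abs_sub _ _).trans ?_
    rw [abs_mul]
    have := mul_le_mul hU1 hD (abs_nonneg _) (by linarith)
    linarith
  have b1 : |(γ + 1 - U) / (σ * (1 + γ * z))| ≤ (|γ| + 1) / σ * T := by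
    have : (γ + 1 - U) / (σ * (1 + γ * z)) = (γ + 1 - U) * M / σ := by
      rw [hE]; field_simp
    rw [this, abs_div, abs_mul, abs_of_pos hM, abs_of_pos hσ, div_mul_eq_mul_div]
    apply div_le_div_of_nonneg_right _ hσ.le
    have h1 := mul_le_mul_of_nonneg_right hU2 hM.le
    have h2 : (|γ| + 1) * (1 + U) * M ≤ (|γ| + 1) * ((1 + U) * (1 + M)) := by
      nlinarith [mul_nonneg (by positivity : 0 ≤ |γ| + 1) (by linarith : 0 ≤ 1 + U)]
    have h3 := mul_le_mul_of_nonneg_left hT3 (by positivity : 0 ≤ |γ| + 1)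
    linarith
  have b2 : |((1 - U) * z - 1) / (σ * (1 + γ * z))| ≤ 2 / σ * T := by
    have : ((1 - U) * z - 1) / (σ * (1 + γ * z)) = ((1 - U) * (z / (1 + γ * z)) - M) / σ := by
      rw [hE]; field_simp
    rw [this, abs_div, abs_of_pos hσ, div_mul_eq_mul_div]
    apply div_le_div_of_nonneg_right _ hσ.le
    refine (abs_sub _ _).trans ?_
    rw [abs_mul, abs_of_pos hM]
    have := mul_le_mul hU1 hz (abs_nonneg _) (by linarith)
    have : M ≤ (1 + U) * (1 + M) := by nlinarith [mul_pos hU hM]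
    linarith
  have : (2 + (|γ| + 3) / σ) * T = 2 * T + (|γ| + 1) / σ * T + 2 / σ * T := by ring
  linarith

lemma main_bound (Γ s : ℝ) (hs : 0 < s) : ∃ C > 0, ∀ (θ : ℝ × ℝ × ℝ) (x : ℝ),
    |θ.1| ≤ Γ → s ≤ θ.2.2 → 0 < gW θ x →
    ‖gSD θ x‖ ≤ C * gA θ.1 (gY θ.1 ((x - θ.2.1) / θ.2.2)) ∧
    gS θ x * (1 + θ.2.2 / gW θ x) ≤ C * gA θ.1 (gY θ.1 ((x - θ.2.1) / θ.2.2)) := by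
  refine ⟨(2 + (|Γ| + 3) / s) * Real.exp (- Real.log s / 2), by positivity, ?_⟩
  intro θ x hΓ hsσ hW
  have hσ : 0 < θ.2.2 := hs.trans_le hsσ
  have hb := score_bound θ x hσ hW
  have hp := gW_div_pos θ x hσ hW
  have hE : Real.exp (-(θ.1 * gY θ.1 ((x - θ.2.1) / θ.2.2))) = θ.2.2 / gW θ x := by
    rw [Real.exp_neg, exp_gY _ _ hp, gW_div _ _ hσ, inv_div]
  have hSle : gS θ x ≤ Real.exp (- Real.log s / 2) *
      Real.exp (-((θ.1 + 1) * gY θ.1 ((x - θ.2.1) / θ.2.2) / 2)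
        - Real.exp (-gY θ.1 ((x - θ.2.1) / θ.2.2)) / 2) := by
    rw [gS_eq θ x hσ hW, ← Real.exp_add, Real.exp_le_exp, gEll]
    have := Real.log_le_log hs hsσ
    linarith
  have hc : (2 + (|θ.1| + 3) / θ.2.2) ≤ (2 + (|Γ| + 3) / s) := by
    have : |θ.1| ≤ |Γ| := hΓ.trans (le_abs_self _)
    gcongr
  rw [← hE]
  unfold gA
  generalize Real.exp (-((θ.1 + 1) * gY θ.1 ((x - θ.2.1) / θ.2.2) / 2)
        - Real.exp (-gY θ.1 ((x - θ.2.1) / θ.2.2)) / 2) = k at *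
  have hM : 0 < Real.exp (-(θ.1 * gY θ.1 ((x - θ.2.1) / θ.2.2))) := Real.exp_pos _
  have hU : 0 < Real.exp (-gY θ.1 ((x - θ.2.1) / θ.2.2)) := Real.exp_pos _
  clear hE
  generalize Real.exp (-(θ.1 * gY θ.1 ((x - θ.2.1) / θ.2.2))) = M at *
  generalize Real.exp (-gY θ.1 ((x - θ.2.1) / θ.2.2)) = U at *
  generalize gY θ.1 ((x - θ.2.1) / θ.2.2) = Y at *
  have hk : 0 ≤ k := by
    have := (gS_nonneg θ x).trans hSle
    exact nonneg_of_mul_nonneg_right this (Real.exp_pos _)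
  constructor
  · rw [gSD, norm_smul, Real.norm_eq_abs, abs_of_nonneg (by have := gS_nonneg θ x; positivity)]
    calc gS θ x / 2 * ‖gDer θ x‖ ≤ gS θ x * ‖gDer θ x‖ := by
          have := gS_nonneg θ x
          gcongr; linarith
      _ ≤ (Real.exp (- Real.log s / 2) * k) * ((2 + (|Γ| + 3) / s) *
          ((1 + U) * (1 + Y ^ 2) * (1 + M))) := by
          refine mul_le_mul hSle (hb.trans ?_) (norm_nonneg _) (by positivity)
          gcongr
      _ = _ := by ring
  · have h2 : 1 ≤ (2 + (|Γ| + 3) / s) := by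
      have : 0 ≤ (|Γ| + 3) / s := by positivity
      linarith
    have h3 : 1 ≤ (1 + U) * (1 + Y ^ 2) := by nlinarith [sq_nonneg Y, mul_nonneg hU.le (sq_nonneg Y)]
    calc gS θ x * (1 + M) ≤ (Real.exp (- Real.log s / 2) * k) * (1 + M) := by gcongr
      _ = 1 * Real.exp (- Real.log s / 2) * (1 * (1 + M) * k) := by ring
      _ ≤ _ := by gcongr

lemma gA_pos (γ y : ℝ) : 0 < gA γ y := by unfold gA; positivity

lemma one_add_sq_le_exp (t : ℝ) (ht : 0 ≤ t) : 1 + t ^ 2 ≤ 2 * Real.exp t := by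
  have := Real.quadratic_le_exp_of_nonneg ht
  linarith

lemma gA_bound (Γ N δ : ℝ) (hΓ : 0 ≤ Γ) (hδ : 0 < δ) : ∃ C > 0, ∀ γ, |γ| ≤ Γ → ∀ y,
    (0 ≤ y → gA γ y ≤ C * Real.exp (-(((γ + 1) / 2 - max (-γ) 0 - δ) * y))) ∧
    (y ≤ 0 → gA γ y ≤ C * Real.exp (N * y)) := by
  obtain ⟨n, hn⟩ := exists_nat_ge (2 + Γ + (Γ + 1) / 2 + N)
  refine ⟨max (4 * (1 + 2 / δ ^ 2)) (8 * (2 ^ n * n.factorial)), by positivity, ?_⟩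
  intro γ hγ y
  rw [abs_le] at hγ
  constructor
  · intro hy
    have h1 : 1 + Real.exp (-y) ≤ 2 := by
      have : Real.exp (-y) ≤ 1 := Real.exp_le_one_iff.2 (by linarith)
      linarith
    have h2 : 1 + y ^ 2 ≤ (1 + 2 / δ ^ 2) * Real.exp (δ * y) := by
      have ha := one_add_sq_le_exp (δ * y) (by positivity)
      have hb : 1 ≤ Real.exp (δ * y) := Real.one_le_exp (by positivity)
      have hc : y ^ 2 ≤ 2 / δ ^ 2 * Real.exp (δ * y) := by
        rw [div_mul_eq_mul_div, le_div_iff₀ (by positivity)]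
        nlinarith
      nlinarith
    have h3 : 1 + Real.exp (-(γ * y)) ≤ 2 * Real.exp (max (-γ) 0 * y) := by
      have ha : Real.exp (-(γ * y)) ≤ Real.exp (max (-γ) 0 * y) := by
        rw [Real.exp_le_exp]
        nlinarith [mul_le_mul_of_nonneg_right (le_max_left (-γ) 0) hy]
      have hb : 1 ≤ Real.exp (max (-γ) 0 * y) :=
        Real.one_le_exp (mul_nonneg (le_max_right _ _) hy)
      linarith
    have h4 : Real.exp (-((γ + 1) * y / 2) - Real.exp (-y) / 2)
        ≤ Real.exp (-((γ + 1) * y / 2)) := by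
      rw [Real.exp_le_exp]; have := Real.exp_pos (-y); linarith
    calc gA γ y ≤ 2 * ((1 + 2 / δ ^ 2) * Real.exp (δ * y)) * (2 * Real.exp (max (-γ) 0 * y)) *
          Real.exp (-((γ + 1) * y / 2)) := by
          unfold gA; gcongr
      _ = (4 * (1 + 2 / δ ^ 2)) * (Real.exp (δ * y) * Real.exp (max (-γ) 0 * y) *
          Real.exp (-((γ + 1) * y / 2))) := by ring
      _ = (4 * (1 + 2 / δ ^ 2)) * Real.exp (-(((γ + 1) / 2 - max (-γ) 0 - δ) * y)) := by
          rw [← Real.exp_add, ← Real.exp_add]; ring_nf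
      _ ≤ _ := by gcongr; exact le_max_left _ _
  · intro hy
    have h0 : 1 ≤ Real.exp (-y) := Real.one_le_exp (by linarith)
    have h1 : 1 + Real.exp (-y) ≤ 2 * Real.exp (-y) := by linarith
    have h2 : 1 + y ^ 2 ≤ 2 * Real.exp (-y) := by
      have := one_add_sq_le_exp (-y) (by linarith)
      simpa using this
    have h3 : 1 + Real.exp (-(γ * y)) ≤ 2 * Real.exp (-(Γ * y)) := by
      have ha : Real.exp (-(γ * y)) ≤ Real.exp (-(Γ * y)) := by
        rw [Real.exp_le_exp]
        nlinarith
      have hb : 1 ≤ Real.exp (-(Γ * y)) := Real.one_le_exp (by nlinarith)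
      linarith
    have h5 : Real.exp (-(Real.exp (-y) / 2)) ≤ 2 ^ n * n.factorial * Real.exp (n * y) := by
      have hf := Real.pow_div_factorial_le_exp (Real.exp (-y) / 2) (by positivity) n
      have e : Real.exp (n * y) = (Real.exp (-y) ^ n)⁻¹ := by
        rw [← Real.exp_nat_mul, ← Real.exp_neg]; ring_nf
      rw [Real.exp_neg, e]
      have e2 : (2:ℝ) ^ n * n.factorial * (Real.exp (-y) ^ n)⁻¹
          = ((Real.exp (-y) / 2) ^ n / n.factorial)⁻¹ := by
        rw [div_pow]; field_simp
      rw [e2]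
      exact inv_anti₀ (by positivity) hf
    have h4 : Real.exp (-((γ + 1) * y / 2) - Real.exp (-y) / 2)
        ≤ Real.exp (-((Γ + 1) * y / 2)) * (2 ^ n * n.factorial * Real.exp (n * y)) := by
      rw [sub_eq_add_neg, Real.exp_add]
      have : Real.exp (-((γ + 1) * y / 2)) ≤ Real.exp (-((Γ + 1) * y / 2)) := by
        rw [Real.exp_le_exp]
        nlinarith
      gcongr
    calc gA γ y ≤ (2 * Real.exp (-y)) * (2 * Real.exp (-y)) * (2 * Real.exp (-(Γ * y))) *
          (Real.exp (-((Γ + 1) * y / 2)) * (2 ^ n * n.factorial * Real.exp (n * y))) := by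
          unfold gA; gcongr
      _ = (8 * (2 ^ n * n.factorial)) * (Real.exp (-y) * Real.exp (-y) * Real.exp (-(Γ * y)) *
          Real.exp (-((Γ + 1) * y / 2)) * Real.exp (n * y)) := by ring
      _ ≤ (8 * (2 ^ n * n.factorial)) * Real.exp (N * y) := by
          rw [← Real.exp_add, ← Real.exp_add, ← Real.exp_add, ← Real.exp_add]
          gcongr
          nlinarith
      _ ≤ _ := by gcongr; exact le_max_right _ _

lemma gA_bound_ne (γ₀ : ℝ) (h0 : γ₀ ≠ 0) (hγ : -(1/2) < γ₀) :
    ∃ ε > 0, ∃ C > 0, ∃ b m : ℝ, -(1/2) < b ∧ b ≤ 0 ∧ 1/2 < m ∧ ε < |γ₀| ∧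
    ∀ γ, |γ - γ₀| ≤ ε → ∀ w, 0 < w →
      (w ≤ 1 → gA γ (Real.log w / γ) ≤ C * w ^ b) ∧
      (1 ≤ w → gA γ (Real.log w / γ) ≤ C * w ^ (-m)) := by
  rcases lt_or_gt_of_ne h0 with hneg | hpos
  · set ε := min ((1/2 + γ₀) / 2) (-γ₀ / 2) with hε
    have hε1 : ε ≤ (1/2 + γ₀) / 2 := min_le_left _ _
    have hε2 : ε ≤ -γ₀ / 2 := min_le_right _ _
    have hε0 : 0 < ε := lt_min (by linarith) (by linarith)
    set g := -γ₀ + ε with hg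
    have hg2 : g < 1/2 := by linarith
    have hg0 : 0 < g := by linarith
    obtain ⟨C, hC, hb⟩ := gA_bound 1 g ((1/2 - g) / 2) (by norm_num) (by linarith)
    refine ⟨ε, hε0, C, hC, min (1 / (4 * g) - 1) 0, 1, ?_, min_le_right _ _, by norm_num,
      by rw [abs_of_neg hneg]; linarith, ?_⟩
    · apply lt_min _ (by norm_num)
      have : 1/2 < 1 / (4 * g) := by
        rw [lt_div_iff₀ (by linarith)]; linarith
      linarith
    intro γ hγε w hw
    rw [abs_le] at hγε
    have hγn : γ < 0 := by linarith
    have hγg : -γ ≤ g := by linarith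
    obtain ⟨hb1, hb2⟩ := hb γ (by rw [abs_of_neg hγn]; linarith) (Real.log w / γ)
    constructor
    · intro hw1
      have hl : Real.log w ≤ 0 := Real.log_nonpos hw.le hw1
      refine (hb1 (div_nonneg_of_nonpos hl hγn.le)).trans ?_
      rw [Real.rpow_def_of_pos hw]
      gcongr
      rw [max_eq_left (by linarith : (0:ℝ) ≤ -γ)]
      have e : -(((γ + 1) / 2 - -γ - (1 / 2 - g) / 2) * (Real.log w / γ))
        = Real.log w * ((1/4 + g/2) / (-γ) - 3/2) := by
        have := hγn.ne
        field_simp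
        ring
      rw [e]
      apply mul_le_mul_of_nonpos_left _ hl
      refine (min_le_left _ _).trans ?_
      have : (1/4 + g/2) / g ≤ (1/4 + g/2) / (-γ) := by
        apply div_le_div_of_nonneg_left (by linarith) (by linarith) hγg
      have e3 : (1/4 + g/2) / g = 1 / (4 * g) + 1/2 := by field_simp
      linarith
    · intro hw1
      have hl : 0 ≤ Real.log w := Real.log_nonneg hw1
      refine (hb2 (div_nonpos_of_nonneg_of_nonpos hl hγn.le)).trans ?_
      rw [Real.rpow_def_of_pos hw]
      refine mul_le_mul_of_nonneg_left (Real.exp_le_exp.2 ?_) hC.le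
      have : 1 ≤ g / (-γ) := by rw [le_div_iff₀ (by linarith)]; linarith
      have e : g * (Real.log w / γ) = - (Real.log w * (g / (-γ))) := by field_simp
      rw [e]
      nlinarith
  · obtain ⟨C, hC, hb⟩ := gA_bound (2 * γ₀) 0 (1/4) (by linarith) (by norm_num)
    refine ⟨γ₀ / 2, by linarith, C, hC, 0, 1/2 + 1 / (8 * γ₀), by norm_num, le_rfl, ?_,
      by rw [abs_of_pos hpos]; linarith, ?_⟩
    · have : 0 < 1 / (8 * γ₀) := by positivity
      linarith
    intro γ hγε w hw
    rw [abs_le] at hγε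
    have hγp : 0 < γ := by linarith
    obtain ⟨hb1, hb2⟩ := hb γ (by rw [abs_of_pos hγp]; linarith) (Real.log w / γ)
    constructor
    · intro hw1
      have hl : Real.log w ≤ 0 := Real.log_nonpos hw.le hw1
      refine (hb2 (div_nonpos_of_nonpos_of_nonneg hl hγp.le)).trans ?_
      simp
    · intro hw1
      have hl : 0 ≤ Real.log w := Real.log_nonneg hw1
      refine (hb1 (div_nonneg hl hγp.le)).trans ?_
      rw [Real.rpow_def_of_pos hw]
      gcongr
      rw [max_eq_right (by linarith : -γ ≤ (0:ℝ))]
      have e : -(((γ + 1) / 2 - 0 - 1 / 4) * (Real.log w / γ))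
        = Real.log w * (- (1/2 + 1 / (4 * γ))) := by
        field_simp
        ring
      rw [e]
      apply mul_le_mul_of_nonneg_left _ hl
      have : 1 / (8 * γ₀) ≤ 1 / (4 * γ) := by
        apply one_div_le_one_div_of_le (by positivity); linarith
      linarith

lemma gA_bound_zero : ∃ C > 0, ∀ γ, |γ| ≤ 1/12 → ∀ y, gA γ y ≤ C * Real.exp (-(|y| / 4)) := by
  obtain ⟨C, hC, hb⟩ := gA_bound (1/12) (1/4) (1/8) (by norm_num) (by norm_num)
  refine ⟨C, hC, fun γ hγ y => ?_⟩
  obtain ⟨hb1, hb2⟩ := hb γ hγ y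
  rw [abs_le] at hγ
  rcases le_total 0 y with hy | hy
  · refine (hb1 hy).trans ?_
    rw [abs_of_nonneg hy]
    gcongr
    have : max (-γ) 0 ≤ 1/12 := max_le (by linarith) (by norm_num)
    nlinarith
  · refine (hb2 hy).trans ?_
    rw [abs_of_nonpos hy]
    gcongr
    linarith

lemma gevU_measurable (γ : ℝ) : Measurable (gevU γ) := by
  unfold gevU
  split_ifs with h
  · fun_prop
  · fun_prop

lemma gS_measurable (θ : ℝ × ℝ × ℝ) : Measurable (gS θ) := by
  unfold gS gevDensity
  apply Measurable.sqrt
  apply Measurable.ite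
  · exact measurableSet_lt measurable_const (by fun_prop)
  · have h : Measurable fun x => gevU θ.1 ((x - θ.2.1) / θ.2.2) :=
      (gevU_measurable θ.1).comp (by fun_prop)
    exact (measurable_const.mul h.neg.exp).mul (h.pow_const _)
  · exact measurable_const

lemma gSD_apply (θ h : ℝ × ℝ × ℝ) (x : ℝ) :
    1 / 2 * (toVec3 h ⬝ᵥ gevScore θ x) * Real.sqrt (gevDensity θ x) = gSD θ x h := by
  simp [gSD, gDer, toVec3, gS, dotProduct, Fin.sum_univ_three]
  ring

lemma gS_hasFDerivAt_ne (θ : ℝ × ℝ × ℝ) (x : ℝ) (hσ : 0 < θ.2.2) (hW : gW θ x ≠ 0) :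
    HasFDerivAt (fun θ => gS θ x) (gSD θ x) θ := by
  rcases lt_or_gt_of_ne hW with h | h
  · exact gS_hasFDerivAt_neg θ x h
  · exact gS_hasFDerivAt θ x hσ h

lemma dqm_of_dominated (θ₀ : ℝ × ℝ × ℝ) (hσ : 0 < θ₀.2.2) (G : ℝ → ℝ)
    (hG : Integrable (fun x => G x ^ 2)) (hG0 : ∀ x, 0 ≤ G x) (ε : ℝ) (hε : 0 < ε)
    (hae : ∀ᵐ x : ℝ, gW θ₀ x ≠ 0)
    (hb : ∀ x, gW θ₀ x ≠ 0 → ∀ h, ‖h‖ ≤ ε → |gS (θ₀ + h) x - gS θ₀ x| ≤ ‖h‖ * G x) :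
    (fun h : ℝ × ℝ × ℝ =>
        ∫ x : ℝ,
          (Real.sqrt (gevDensity (θ₀ + h) x) - Real.sqrt (gevDensity θ₀ x)
            - 1 / 2 * (toVec3 h ⬝ᵥ gevScore θ₀ x) * Real.sqrt (gevDensity θ₀ x)) ^ 2)
      =o[nhds 0] fun h => ‖h‖ ^ 2 := by
  simp only [gSD_apply]
  change (fun h : ℝ × ℝ × ℝ => ∫ x : ℝ, (gS (θ₀ + h) x - gS θ₀ x - gSD θ₀ x h) ^ 2)
      =o[nhds 0] fun h => ‖h‖ ^ 2
  rw [isLittleO_iff_tendsto]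
  swap
  · intro h hh
    have : h = 0 := by simpa using hh
    simp [this]
  have hbd : ∀ x, gW θ₀ x ≠ 0 → ‖gSD θ₀ x‖ ≤ G x := by
    intro x hx
    refine (gS_hasFDerivAt_ne θ₀ x hσ hx).le_of_lip' (hG0 x) ?_
    filter_upwards [Metric.closedBall_mem_nhds θ₀ hε] with θ hθ
    have := hb x hx (θ - θ₀) (by simpa [dist_eq_norm] using hθ)
    rw [add_sub_cancel] at this
    rw [Real.norm_eq_abs]; linarith
  have hmeas : ∀ h, AEStronglyMeasurable (fun x => gSD θ₀ x h) volume := by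
    intro h
    refine aestronglyMeasurable_of_tendsto_ae atTop
      (f := fun (n : ℕ) x => (n : ℝ) • (gS (θ₀ + (n : ℝ)⁻¹ • h) x - gS θ₀ x)) ?_ ?_
    · intro n
      exact (((gS_measurable _).sub (gS_measurable _)).const_smul (n : ℝ)).aestronglyMeasurable
    · filter_upwards [hae] with x hx
      apply (gS_hasFDerivAt_ne θ₀ x hσ hx).lim
      simpa using tendsto_natCast_atTop_atTop
  have key : Tendsto (fun h : ℝ × ℝ × ℝ =>
      ∫ x : ℝ, (gS (θ₀ + h) x - gS θ₀ x - gSD θ₀ x h) ^ 2 / ‖h‖ ^ 2) (nhds 0)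
      (nhds (∫ x : ℝ, (0:ℝ))) := by
    refine tendsto_integral_filter_of_dominated_convergence (fun x => 4 * G x ^ 2) ?_ ?_
      (hG.const_mul 4) ?_
    · refine Eventually.of_forall fun h => ?_
      have h1 := ((gS_measurable (θ₀ + h)).sub (gS_measurable θ₀)).aestronglyMeasurable
        (μ := volume)
      have h2 := ((h1.sub (hmeas h)).pow 2).mul_const ((‖h‖ ^ 2)⁻¹)
      simpa [div_eq_mul_inv] using h2
    · filter_upwards [Metric.closedBall_mem_nhds (0 : ℝ × ℝ × ℝ) hε] with h hh
      filter_upwards [hae] with x hx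
      have h1 := hb x hx h (by simpa using hh)
      have h2 : |gSD θ₀ x h| ≤ G x * ‖h‖ :=
        ((gSD θ₀ x).le_opNorm h).trans (mul_le_mul_of_nonneg_right (hbd x hx) (norm_nonneg _))
      have h3 : |gS (θ₀ + h) x - gS θ₀ x - gSD θ₀ x h| ≤ 2 * G x * ‖h‖ :=
        (abs_sub _ _).trans (by linarith)
      rw [Real.norm_eq_abs, abs_of_nonneg (by positivity)]
      apply div_le_of_le_mul₀ (by positivity) (by have := hG0 x; positivity)
      rw [← sq_abs]
      calc _ ≤ (2 * G x * ‖h‖) ^ 2 := by gcongr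
        _ = _ := by ring
    · filter_upwards [hae] with x hx
      have h1 := (gS_hasFDerivAt_ne θ₀ x hσ hx)
      rw [hasFDerivAt_iff_isLittleO_nhds_zero] at h1
      have h2 := (h1.norm_right.pow (n := 2) (by norm_num)).tendsto_div_nhds_zero
      exact h2
  simp only [integral_zero] at key
  refine key.congr fun h => ?_
  rw [integral_div]

lemma gS_mvt (θ₀ h : ℝ × ℝ × ℝ) (x B : ℝ)
    (hb : ∀ θ, ‖θ - θ₀‖ ≤ ‖h‖ → 0 < θ.2.2 ∧ 0 < gW θ x ∧ ‖gSD θ x‖ ≤ B) :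
    |gS (θ₀ + h) x - gS θ₀ x| ≤ ‖h‖ * B := by
  have := (convex_closedBall θ₀ ‖h‖).norm_image_sub_le_of_norm_hasFDerivWithin_le
    (f := fun θ => gS θ x) (f' := fun θ => gSD θ x) (C := B) (x := θ₀) (y := θ₀ + h)
    (fun θ hθ => by
      obtain ⟨h1, h2, h3⟩ := hb θ (by simpa [dist_eq_norm] using hθ)
      exact (gS_hasFDerivAt θ x h1 h2).hasFDerivWithinAt)
    (fun θ hθ => (hb θ (by simpa [dist_eq_norm] using hθ)).2.2)
    (by simp) (by simp)
  rw [add_sub_cancel_left, Real.norm_eq_abs] at this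
  linarith

lemma gPhi_anti {v w : ℝ} (hv : 0 < 1 + v) (hvw : v ≤ w) : gPhi w ≤ gPhi v := by
  have : AntitoneOn gPhi (Ioi (-1)) := by
    apply antitoneOn_of_deriv_nonpos (convex_Ioi _)
    · intro t ht
      have : 0 < 1 + t := by have := mem_Ioi.1 ht; linarith
      exact (gPhi_hasDerivAt t this).continuousAt.continuousWithinAt
    · intro t ht
      rw [interior_Ioi] at ht
      have : 0 < 1 + t := by have := mem_Ioi.1 ht; linarith
      exact (gPhi_hasDerivAt t this).differentiableAt.differentiableWithinAt
    · intro t ht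
      rw [interior_Ioi] at ht
      have hp : 0 < 1 + t := by have := mem_Ioi.1 ht; linarith
      rw [(gPhi_hasDerivAt t hp).deriv]
      by_cases h0 : t = 0
      · simp [gPhi', h0]
      have hl := Real.one_sub_inv_le_log_of_pos hp
      have hr := gPhi_rel t
      have hm := gPhi_mul t
      have e : t ^ 2 * gPhi' t = 1 - (1 + t)⁻¹ - Real.log (1 + t) := by
        have hq := mul_inv_cancel₀ hp.ne'
        rw [one_div] at hr
        linear_combination t * hr - hm + hq
      have : 0 < t ^ 2 := by positivity
      by_contra hc
      push Not at hc
      nlinarith [mul_pos this hc]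
  exact this (mem_Ioi.2 (by linarith)) (mem_Ioi.2 (by linarith)) hvw

lemma gY_lower (γ z : ℝ) (hγ : |γ| ≤ 1/12) (h : 0 < 1 + γ * z) :
    Real.exp (-(|gY γ z| / 4)) ≤ ((1 + |z| / 12) ^ 3)⁻¹ := by
  have h1 : γ * z ≤ |z| / 12 := by
    have := abs_mul γ z
    nlinarith [le_abs_self (γ * z), abs_nonneg z]
  have h2 := gPhi_anti h h1
  have h3 := gPhi_mul (|z| / 12)
  have h4 : 12 * Real.log (1 + |z| / 12) ≤ |gY γ z| := by
    rw [gY, abs_mul, ← h3]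
    nlinarith [abs_nonneg z, le_abs_self (gPhi (γ * z))]
  have h5 : 0 < 1 + |z| / 12 := by positivity
  rw [← Real.exp_log h5, ← Real.exp_nat_mul, ← Real.exp_neg, Real.exp_le_exp]
  push_cast
  linarith

lemma abs_sub_le_of_nonneg {a b B : ℝ} (ha : 0 ≤ a) (hb : 0 ≤ b) (haB : a ≤ B) (hbB : b ≤ B) :
    |a - b| ≤ B := by
  rw [abs_le]; constructor <;> linarith

lemma comp_le {θ θ₀ : ℝ × ℝ × ℝ} {ρ : ℝ} (h : ‖θ - θ₀‖ ≤ ρ) :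
    |θ.1 - θ₀.1| ≤ ρ ∧ |θ.2.1 - θ₀.2.1| ≤ ρ ∧ |θ.2.2 - θ₀.2.2| ≤ ρ :=
  ⟨(norm_fst_le (θ - θ₀)).trans h,
   ((norm_fst_le (θ - θ₀).2).trans (norm_snd_le _)).trans h,
   ((norm_snd_le (θ - θ₀).2).trans (norm_snd_le _)).trans h⟩

lemma case_zero (θ₀ : ℝ × ℝ × ℝ) (hγ : θ₀.1 = 0) (hσ : 0 < θ₀.2.2) :
    ∃ G : ℝ → ℝ, Integrable (fun x => G x ^ 2) ∧ (∀ x, 0 ≤ G x) ∧ ∃ ε > 0,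
      ∀ x, gW θ₀ x ≠ 0 → ∀ h, ‖h‖ ≤ ε → |gS (θ₀ + h) x - gS θ₀ x| ≤ ‖h‖ * G x := by
  obtain ⟨C1, hC1, hb1⟩ := main_bound (1/12) (θ₀.2.2 / 2) (by linarith)
  obtain ⟨C2, hC2, hb2⟩ := gA_bound_zero
  set σ₀ := θ₀.2.2 with hσ₀
  set μ₀ := θ₀.2.1 with hμ₀
  set R := 24 * σ₀ + 2 with hR
  set K := C1 * C2 * R ^ 3 with hK
  set ε := min (1/12) (σ₀ / 2) with hε
  have hε0 : 0 < ε := lt_min (by norm_num) (by linarith)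
  have hε1 : ε ≤ 1/12 := min_le_left _ _
  have hε2 : ε ≤ σ₀ / 2 := min_le_right _ _
  have hR0 : 0 < R := by linarith
  have hK0 : 0 < K := by positivity
  -- pointwise bound
  have hpt : ∀ x θ, ‖θ - θ₀‖ ≤ ε → 0 < gW θ x →
      ‖gSD θ x‖ ≤ K / (1 + |x - μ₀|) ^ 3 ∧ gS θ x ≤ K / (1 + |x - μ₀|) ^ 3 := by
    intro x θ hθ hW
    obtain ⟨c1, c2, c3⟩ := comp_le hθ
    rw [hγ, sub_zero] at c1
    rw [abs_le] at c3
    have hσp : 0 < θ.2.2 := by linarith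
    obtain ⟨d1, d2⟩ := hb1 θ x (c1.trans hε1) (by linarith) hW
    have hA := hb2 θ.1 (c1.trans hε1) (gY θ.1 ((x - θ.2.1) / θ.2.2))
    have hY := gY_lower θ.1 ((x - θ.2.1) / θ.2.2) (c1.trans hε1) (gW_div_pos θ x hσp hW)
    have hz : (1 + |x - μ₀|) / R ≤ 1 + |(x - θ.2.1) / θ.2.2| / 12 := by
      rw [div_le_iff₀ hR0]
      set a := |(x - θ.2.1) / θ.2.2| with ha
      have e : |x - θ.2.1| = a * θ.2.2 := by
        rw [ha, abs_div, abs_of_pos hσp]; field_simp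
      have t : |x - μ₀| ≤ |x - θ.2.1| + |θ.2.1 - μ₀| := abs_sub_le _ _ _
      have ha0 : 0 ≤ a := abs_nonneg _
      have : a * θ.2.2 ≤ a * (2 * σ₀) := by gcongr; linarith
      rw [hR]
      nlinarith
    have hfin : C1 * gA θ.1 (gY θ.1 ((x - θ.2.1) / θ.2.2)) ≤ K / (1 + |x - μ₀|) ^ 3 := by
      calc _ ≤ C1 * (C2 * ((1 + |(x - θ.2.1) / θ.2.2| / 12) ^ 3)⁻¹) := by
            gcongr
            exact hA.trans (by gcongr)
        _ ≤ C1 * (C2 * (((1 + |x - μ₀|) / R) ^ 3)⁻¹) := by gcongr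
        _ = _ := by rw [hK, div_pow]; field_simp
    refine ⟨d1.trans hfin, le_trans ?_ (d2.trans hfin)⟩
    have : 0 < θ.2.2 / gW θ x := by positivity
    nlinarith [gS_nonneg θ x]
  have hpt' : ∀ x θ, ‖θ - θ₀‖ ≤ ε → gS θ x ≤ K / (1 + |x - μ₀|) ^ 3 := by
    intro x θ hθ
    rcases le_or_gt (gW θ x) 0 with h | h
    · rw [gS_eq_zero θ x h]; positivity
    · exact (hpt x θ hθ h).2
  refine ⟨fun x => (K + K * (4 / σ₀)) / (1 + |x - μ₀|) ^ 2, ?_, fun x => by positivity,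
    ε, hε0, ?_⟩
  · have hi : Integrable (fun x : ℝ => (1 + ‖x‖) ^ (-(4:ℝ))) :=
      integrable_one_add_norm (by simp)
    have hi2 := (hi.comp_sub_right μ₀).const_mul ((K + K * (4 / σ₀)) ^ 2)
    refine hi2.congr (Eventually.of_forall fun x => ?_)
    have hp : 0 < 1 + |x - μ₀| := by positivity
    simp only [Real.norm_eq_abs]
    rw [Real.rpow_neg hp.le, div_pow, ← pow_mul]
    norm_num
    rw [div_eq_mul_inv]
    norm_cast
  · intro x _ h hh
    beta_reduce
    set T := 1 + |x - μ₀| with hT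
    have hQ0 : 0 ≤ K * (4 / σ₀) := by positivity
    have hT1 : 1 ≤ T := by have := abs_nonneg (x - μ₀); linarith
    have hT0 : 0 < T := by linarith
    have h32 : K / T ^ 3 ≤ K / T ^ 2 := by
      gcongr
      norm_num
    rcases le_or_gt (‖h‖ * T) (σ₀ / 4) with hg | hg
    · have := gS_mvt θ₀ h x (K / T ^ 3) (fun θ hθ => by
        obtain ⟨c1, c2, c3⟩ := comp_le hθ
        rw [hγ, sub_zero] at c1
        rw [abs_le] at c3
        have hW : 0 < gW θ x := by
          unfold gW
          have t : |x - θ.2.1| ≤ |x - μ₀| + |μ₀ - θ.2.1| := abs_sub_le _ _ _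
          rw [abs_sub_comm μ₀] at t
          have t2 : |θ.1 * (x - θ.2.1)| ≤ ‖h‖ * T := by
            rw [abs_mul]
            exact mul_le_mul c1 (by linarith) (abs_nonneg _) (norm_nonneg _)
          rw [abs_le] at t2
          linarith
        exact ⟨by linarith, hW, (hpt x θ (hθ.trans hh) hW).1⟩)
      refine this.trans ?_
      refine mul_le_mul_of_nonneg_left (h32.trans ?_) (norm_nonneg _)
      exact div_le_div_of_nonneg_right (by linarith) (by positivity)
    · have h1 := hpt' x (θ₀ + h) (by simpa using hh)
      have h2 := hpt' x θ₀ (by simpa using hε0.le)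
      refine (abs_sub_le_of_nonneg (gS_nonneg _ _) (gS_nonneg _ _) h1 h2).trans ?_
      have : 1 ≤ ‖h‖ * T * (4 / σ₀) := by
        rw [mul_div_assoc', le_div_iff₀ hσ]; linarith
      calc K / T ^ 3 = K * 1 / T ^ 3 := by ring
        _ ≤ K * (‖h‖ * T * (4 / σ₀)) / T ^ 3 := by gcongr
        _ = ‖h‖ * (K * (4 / σ₀) / T ^ 2) := by field_simp
        _ ≤ _ := mul_le_mul_of_nonneg_left
          (div_le_div_of_nonneg_right (by linarith) (by positivity)) (norm_nonneg _)

lemma gH_integrable (b m : ℝ) (hb : -(1/2) < b) (hm : 1/2 < m) :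
    Integrable (fun t : ℝ => (min (|t| ^ b) (|t| ^ (-m))) ^ 2) := by
  have hmeas : Measurable (fun t : ℝ => (min (|t| ^ b) (|t| ^ (-m))) ^ 2) := by
    have : Measurable (fun t : ℝ => |t|) := continuous_abs.measurable
    fun_prop
  have h1 : IntegrableOn (fun t : ℝ => (min (|t| ^ b) (|t| ^ (-m))) ^ 2) (Ioc 0 1) := by
    have : IntegrableOn (fun t : ℝ => t ^ (2 * b)) (Ioc 0 1) := by
      have := intervalIntegral.intervalIntegrable_rpow' (a := 0) (b := 1) (r := 2 * b) (by linarith)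
      rwa [intervalIntegrable_iff_integrableOn_Ioc_of_le zero_le_one] at this
    refine Integrable.mono' this hmeas.aestronglyMeasurable ?_
    refine (ae_restrict_iff' measurableSet_Ioc).2 (Eventually.of_forall fun t ht => ?_)
    have hn : 0 ≤ min (|t| ^ b) (|t| ^ (-m)) := le_min (by positivity) (by positivity)
    rw [Real.norm_eq_abs, abs_of_nonneg (by positivity)]
    calc _ ≤ (|t| ^ b) ^ 2 := pow_le_pow_left₀ hn (min_le_left _ _) 2
      _ = t ^ (2 * b) := by
        rw [abs_of_pos ht.1, ← Real.rpow_natCast, ← Real.rpow_mul ht.1.le]; congr 1; push_cast; ring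
  have h2 : IntegrableOn (fun t : ℝ => (min (|t| ^ b) (|t| ^ (-m))) ^ 2) (Ioi 1) := by
    have : IntegrableOn (fun t : ℝ => t ^ (-(2 * m))) (Ioi 1) :=
      integrableOn_Ioi_rpow_of_lt (by linarith) one_pos
    refine Integrable.mono' this hmeas.aestronglyMeasurable ?_
    refine (ae_restrict_iff' measurableSet_Ioi).2 (Eventually.of_forall fun t ht => ?_)
    have ht0 : 0 < t := lt_trans one_pos ht
    have hn : 0 ≤ min (|t| ^ b) (|t| ^ (-m)) := le_min (by positivity) (by positivity)
    rw [Real.norm_eq_abs, abs_of_nonneg (by positivity)]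
    calc _ ≤ (|t| ^ (-m)) ^ 2 := pow_le_pow_left₀ hn (min_le_right _ _) 2
      _ = t ^ (-(2 * m)) := by
        rw [abs_of_pos ht0, ← Real.rpow_natCast, ← Real.rpow_mul ht0.le]; congr 1; push_cast; ring
  have h3 : IntegrableOn (fun t : ℝ => (min (|t| ^ b) (|t| ^ (-m))) ^ 2) (Ioi 0) := by
    rw [← Ioc_union_Ioi_eq_Ioi (zero_le_one' ℝ)]
    exact h1.union h2
  have h4 : IntegrableOn (fun t : ℝ => (min (|t| ^ b) (|t| ^ (-m))) ^ 2) (Iio 0) := by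
    have := h3.comp_neg
    simpa using this
  rw [← integrableOn_univ, ← Iic_union_Ioi (a := (0:ℝ))]
  exact ((integrableOn_Iic_iff_integrableOn_Iio enorm_ne_top).2 h4).union h3

lemma gH_anti {b m s t : ℝ} (hb : b ≤ 0) (hm : 0 ≤ m) (hs : 0 < s) (hst : s ≤ t) :
    min (t ^ b) (t ^ (-m)) ≤ min (s ^ b) (s ^ (-m)) :=
  min_le_min (Real.rpow_le_rpow_of_nonpos hs hst hb)
    (Real.rpow_le_rpow_of_nonpos hs hst (by linarith))

lemma gH_affine_integrable (θ₀ : ℝ × ℝ × ℝ) (h0 : θ₀.1 ≠ 0) (R : ℝ) (hR : 0 < R)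
    (b m : ℝ) (hb : -(1/2) < b) (hm : 1/2 < m) :
    Integrable (fun x : ℝ => (min ((|gW θ₀ x| / R) ^ b) ((|gW θ₀ x| / R) ^ (-m))) ^ 2) := by
  have h1 := (gH_integrable b m hb hm).comp_mul_left' (R := θ₀.1 / R) (by positivity)
  have h2 := h1.comp_sub_right (θ₀.2.1 - θ₀.2.2 / θ₀.1)
  refine h2.congr (Eventually.of_forall fun x => ?_)
  have : |gW θ₀ x| / R = |θ₀.1 / R * (x - (θ₀.2.1 - θ₀.2.2 / θ₀.1))| := by
    rw [show θ₀.1 / R * (x - (θ₀.2.1 - θ₀.2.2 / θ₀.1)) = gW θ₀ x / R by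
      unfold gW; field_simp; ring, abs_div, abs_of_pos hR]
  simp only [this]

lemma gW_diff (θ₀ θ : ℝ × ℝ × ℝ) (h0 : θ₀.1 ≠ 0) (hσ : 0 < θ₀.2.2) (x ρ : ℝ) (hρ1 : ρ ≤ 1)
    (hθ : ‖θ - θ₀‖ ≤ ρ) :
    |gW θ x - gW θ₀ x| ≤ (2 + |θ₀.1| + (1 + θ₀.2.2) / |θ₀.1|) * ρ * (1 + |gW θ₀ x|) := by
  obtain ⟨c1, c2, c3⟩ := comp_le hθ
  have hg : 0 < |θ₀.1| := abs_pos.2 h0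
  have hρ0 : 0 ≤ ρ := (norm_nonneg _).trans hθ
  have hx : |x - θ₀.2.1| = |gW θ₀ x - θ₀.2.2| / |θ₀.1| := by
    rw [← abs_div]; congr 1; unfold gW; field_simp; ring
  have hx2 : |x - θ₀.2.1| ≤ (|gW θ₀ x| + θ₀.2.2) / |θ₀.1| := by
    rw [hx]
    have := abs_sub (gW θ₀ x) θ₀.2.2
    rw [abs_of_pos hσ] at this
    gcongr
  have e : gW θ x - gW θ₀ x = (θ.2.2 - θ₀.2.2) + (θ.1 - θ₀.1) * (x - θ₀.2.1)
      - θ.1 * (θ.2.1 - θ₀.2.1) := by unfold gW; ring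
  have hg1 : |θ.1| ≤ |θ₀.1| + 1 := by
    have := abs_sub_abs_le_abs_sub θ.1 θ₀.1; linarith
  have t1 : |(θ.1 - θ₀.1) * (x - θ₀.2.1)| ≤ ρ * ((|gW θ₀ x| + θ₀.2.2) / |θ₀.1|) := by
    rw [abs_mul]; gcongr
  have t2 : |θ.1 * (θ.2.1 - θ₀.2.1)| ≤ (|θ₀.1| + 1) * ρ := by
    rw [abs_mul]; gcongr
  have t3 : |gW θ x - gW θ₀ x| ≤ ρ + ρ * ((|gW θ₀ x| + θ₀.2.2) / |θ₀.1|) + (|θ₀.1| + 1) * ρ := by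
    rw [e, abs_le]
    rw [abs_le] at t1 t2 c3
    constructor <;> linarith
  refine t3.trans ?_
  set a := |gW θ₀ x| with ha
  have ha0 : 0 ≤ a := abs_nonneg _
  have t4 : (a + θ₀.2.2) / |θ₀.1| ≤ (1 + θ₀.2.2) / |θ₀.1| * (1 + a) := by
    rw [div_mul_eq_mul_div]
    gcongr
    nlinarith
  have t5 : ρ * ((a + θ₀.2.2) / |θ₀.1|) ≤ ρ * ((1 + θ₀.2.2) / |θ₀.1| * (1 + a)) := by gcongr
  have t6 : 0 ≤ (2 + |θ₀.1|) * ρ * a := by positivity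
  nlinarith

set_option maxHeartbeats 1600000 in
lemma case_ne (θ₀ : ℝ × ℝ × ℝ) (hγ : -(1/2) < θ₀.1) (h0 : θ₀.1 ≠ 0) (hσ : 0 < θ₀.2.2) :
    ∃ G : ℝ → ℝ, Integrable (fun x => G x ^ 2) ∧ (∀ x, 0 ≤ G x) ∧ ∃ ε > 0,
      ∀ x, gW θ₀ x ≠ 0 → ∀ h, ‖h‖ ≤ ε → |gS (θ₀ + h) x - gS θ₀ x| ≤ ‖h‖ * G x := by
  obtain ⟨ε0, hε0, C2, hC2, b, m, hb1, hb0, hm, hε0', hA⟩ := gA_bound_ne θ₀.1 h0 hγ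
  obtain ⟨C1, hC1, hB⟩ := main_bound (|θ₀.1| + ε0) (θ₀.2.2 / 2) (by linarith)
  have hdiff := gW_diff θ₀
  set σ₀ := θ₀.2.2 with hσ₀
  set Q := 2 + |θ₀.1| + (1 + σ₀) / |θ₀.1| with hQ
  have hg : 0 < |θ₀.1| := abs_pos.2 h0
  have hQ0 : 0 < Q := by positivity
  set K := C1 * C2 with hK
  have hK0 : 0 < K := by positivity
  set R := 4 * σ₀ + 4 * Q with hR
  have hR0 : 0 < R := by positivity
  set K' := K * (12 * Q / σ₀) ^ (b + 1) with hK'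
  have hK'0 : 0 < K' := by positivity
  obtain ⟨ε, hε, e1, e2, e3, e4, e5, e6⟩ : ∃ ε > 0, ε ≤ ε0 ∧ ε ≤ σ₀ / 2 ∧ ε ≤ 1 ∧ ε ≤ 1 / (4 * Q) ∧
      ε ≤ σ₀ / (12 * Q) ∧ ε ≤ 1 := by
    refine ⟨min ε0 (min (σ₀ / 2) (min 1 (min (1 / (4 * Q)) (σ₀ / (12 * Q))))), by positivity,
      ?_, ?_, ?_, ?_, ?_, ?_⟩ <;> simp
  rw [le_div_iff₀ (by positivity)] at e4 e5
  -- pointwise bounds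
  have hpt : ∀ x θ, ‖θ - θ₀‖ ≤ ε → 0 < gW θ x → θ.2.2 ≤ 2 * σ₀ ∧ σ₀ / 2 ≤ θ.2.2 ∧
      ‖gSD θ x‖ ≤ K * min ((gW θ x / θ.2.2) ^ b) ((gW θ x / θ.2.2) ^ (-m)) ∧
      (gW θ x / θ.2.2 ≤ 1 → gS θ x ≤ K * (gW θ x / θ.2.2) ^ (b + 1)) := by
    intro x θ hθ hW
    obtain ⟨c1, c2, c3⟩ := comp_le hθ
    rw [abs_le] at c3
    have hσp : 0 < θ.2.2 := by linarith
    have hg1 : |θ.1| ≤ |θ₀.1| + ε0 := by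
      have := abs_sub_abs_le_abs_sub θ.1 θ₀.1; linarith
    have hne : θ.1 ≠ 0 := by
      intro h
      rw [h, zero_sub, abs_neg] at c1
      linarith
    obtain ⟨d1, d2⟩ := hB θ x hg1 (by linarith) hW
    set w := gW θ x / θ.2.2 with hw
    have hw0 : 0 < w := by positivity
    have hY : gY θ.1 ((x - θ.2.1) / θ.2.2) = Real.log w / θ.1 := by
      have := gY_mul θ.1 ((x - θ.2.1) / θ.2.2)
      rw [gW_div θ x hσp] at this
      rw [eq_div_iff hne, mul_comm]; exact this
    rw [hY] at d1 d2
    obtain ⟨a1, a2⟩ := hA θ.1 (c1.trans e1) w hw0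
    refine ⟨by linarith, by linarith, ?_, ?_⟩
    · refine d1.trans ?_
      rw [hK, mul_assoc]
      refine mul_le_mul_of_nonneg_left ?_ hC1.le
      rcases le_total w 1 with h | h
      · rw [min_eq_left (Real.rpow_le_rpow_of_exponent_ge hw0 h (by linarith))]
        exact a1 h
      · rw [min_eq_right (Real.rpow_le_rpow_of_exponent_le h (by linarith))]
        exact a2 h
    · intro h
      have hS := gS_nonneg θ x
      have : θ.2.2 / gW θ x = w⁻¹ := by rw [hw, inv_div]
      rw [this] at d2
      have d3 : gS θ x * w⁻¹ ≤ C1 * (C2 * w ^ b) := by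
        have := mul_le_mul_of_nonneg_left (a1 h) hC1.le
        linarith
      rw [← div_eq_mul_inv, div_le_iff₀ hw0] at d3
      rw [Real.rpow_add_one hw0.ne']
      calc _ ≤ _ := d3
        _ = _ := by rw [hK]; ring
  refine ⟨fun x => (K + K') * min ((|gW θ₀ x| / R) ^ b) ((|gW θ₀ x| / R) ^ (-m)), ?_,
    fun x => by positivity, ε, hε, ?_⟩
  · simp only [mul_pow]
    exact (gH_affine_integrable θ₀ h0 R hR0 b m hb1 hm).const_mul _
  intro x hx h hh
  beta_reduce
  set ρ := ‖h‖ with hρ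
  have hρ0 : 0 ≤ ρ := norm_nonneg _
  have hx0 : 0 < |gW θ₀ x| := abs_pos.2 hx
  have hd : ∀ θ, ‖θ - θ₀‖ ≤ ρ → |gW θ x - gW θ₀ x| ≤ Q * ρ + |gW θ₀ x| / 4 := by
    intro θ hθ
    refine (hdiff θ h0 hσ x ρ (hh.trans e3) hθ).trans ?_
    have : Q * ρ ≤ 1 / 4 := by nlinarith
    nlinarith
  have hH0 : 0 ≤ min ((|gW θ₀ x| / R) ^ b) ((|gW θ₀ x| / R) ^ (-m)) := by positivity
  rcases le_or_gt (4 * Q * ρ) (gW θ₀ x) with hc | hc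
  · have hp : 0 < gW θ₀ x := lt_of_le_of_ne (le_trans (by positivity) hc) (Ne.symm hx)
    have := gS_mvt θ₀ h x (K * min ((|gW θ₀ x| / R) ^ b) ((|gW θ₀ x| / R) ^ (-m)))
      (fun θ hθ => by
        have h1 := hd θ hθ
        rw [abs_of_pos hp, abs_le] at h1
        have hW : gW θ₀ x / 2 ≤ gW θ x := by linarith
        have hW0 : 0 < gW θ x := by linarith
        obtain ⟨p1, p2, p3, -⟩ := hpt x θ (hθ.trans hh) hW0
        have hσp : 0 < θ.2.2 := by linarith
        refine ⟨hσp, hW0, p3.trans ?_⟩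
        refine mul_le_mul_of_nonneg_left ?_ hK0.le
        refine gH_anti hb0 (by linarith) (by positivity) ?_
        rw [abs_of_pos hp, div_le_div_iff₀ hR0 hσp]
        nlinarith)
    refine this.trans ?_
    refine mul_le_mul_of_nonneg_left ?_ hρ0
    exact mul_le_mul_of_nonneg_right (by linarith) hH0
  · have key : ∀ θ, ‖θ - θ₀‖ ≤ ρ → gS θ x ≤
        ρ * (K' * min ((|gW θ₀ x| / R) ^ b) ((|gW θ₀ x| / R) ^ (-m))) := by
      intro θ hθ
      rcases le_or_gt (gW θ x) 0 with hW | hW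
      · rw [gS_eq_zero θ x hW]; positivity
      obtain ⟨p1, p2, -, p4⟩ := hpt x θ (hθ.trans hh) hW
      have h1 := hd θ hθ
      have hσp : 0 < θ.2.2 := by linarith
      have hQρ : 0 ≤ Q * ρ := by positivity
      have habs : |gW θ₀ x| ≤ 4 * Q * ρ := by
        rcases abs_cases (gW θ₀ x) with ⟨q, _⟩ | ⟨q, _⟩
        · linarith
        · rw [q] at h1 ⊢
          rw [abs_le] at h1
          linarith
      have hρp : 0 < ρ := by
        by_contra hn
        have : ρ = 0 := le_antisymm (not_lt.1 hn) hρ0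
        rw [this] at habs; linarith
      rw [abs_le] at h1
      have hWle : gW θ x ≤ 6 * Q * ρ := by linarith
      have hw : gW θ x / θ.2.2 ≤ 12 * Q / σ₀ * ρ := by
        rw [div_mul_eq_mul_div, div_le_div_iff₀ hσp hσ]
        have : gW θ x * σ₀ ≤ 6 * Q * ρ * σ₀ := by gcongr
        have : 6 * Q * ρ * σ₀ ≤ 6 * Q * ρ * (2 * θ.2.2) := by gcongr; linarith
        linarith
      have hw1 : 12 * Q / σ₀ * ρ ≤ 1 := by
        rw [div_mul_eq_mul_div, div_le_one hσ]
        nlinarith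
      have hmin : min ((|gW θ₀ x| / R) ^ b) ((|gW θ₀ x| / R) ^ (-m)) = (|gW θ₀ x| / R) ^ b := by
        refine min_eq_left (Real.rpow_le_rpow_of_exponent_ge (by positivity) ?_ (by linarith))
        rw [div_le_one hR0]
        nlinarith
      rw [hmin]
      calc gS θ x ≤ K * (gW θ x / θ.2.2) ^ (b + 1) := p4 (hw.trans hw1)
        _ ≤ K * (12 * Q / σ₀ * ρ) ^ (b + 1) := by
          refine mul_le_mul_of_nonneg_left ?_ hK0.le
          exact Real.rpow_le_rpow (by positivity) hw (by linarith)
        _ = ρ * (K' * ρ ^ b) := by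
          rw [Real.mul_rpow (by positivity) hρ0, Real.rpow_add_one hρp.ne', hK']; ring
        _ ≤ _ := by
          refine mul_le_mul_of_nonneg_left (mul_le_mul_of_nonneg_left ?_ hK'0.le) hρ0
          refine Real.rpow_le_rpow_of_nonpos (by positivity) ?_ hb0
          rw [div_le_iff₀ hR0]
          nlinarith
    have k1 := key (θ₀ + h) (by simp [hρ])
    have k2 := key θ₀ (by simpa using hρ0)
    refine (abs_sub_le_of_nonneg (gS_nonneg _ _) (gS_nonneg _ _) k1 k2).trans ?_
    refine mul_le_mul_of_nonneg_left ?_ hρ0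
    exact mul_le_mul_of_nonneg_right (by linarith) hH0
/-- **Differentiability in quadratic mean of the GEV family** at any
`θ₀ = (γ₀, μ₀, σ₀)` with `γ₀ > −1/2`:
`∫ (√p_{θ₀+h}(x) − √p_{θ₀}(x) − ½ hᵀ ℓ̇_{θ₀}(x) √p_{θ₀}(x))² dx = o(‖h‖²)` as `h → 0`. -/
theorem gev_dqm (θ₀ : ℝ × ℝ × ℝ) (hγ : -(1/2) < θ₀.1) (hσ : 0 < θ₀.2.2) :
    (fun h : ℝ × ℝ × ℝ =>
        ∫ x : ℝ,
          (Real.sqrt (gevDensity (θ₀ + h) x) - Real.sqrt (gevDensity θ₀ x)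
            - 1 / 2 * (toVec3 h ⬝ᵥ gevScore θ₀ x) * Real.sqrt (gevDensity θ₀ x)) ^ 2)
      =o[nhds 0] fun h => ‖h‖ ^ 2 := by
  by_cases h0 : θ₀.1 = 0
  · obtain ⟨G, hG, hG0, ε, hε, hb⟩ := case_zero θ₀ h0 hσ
    refine dqm_of_dominated θ₀ hσ G hG hG0 ε hε (Eventually.of_forall fun x => ?_) hb
    unfold gW
    rw [h0, zero_mul, add_zero]
    exact hσ.ne'
  · obtain ⟨G, hG, hG0, ε, hε, hb⟩ := case_ne θ₀ hγ h0 hσ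
    refine dqm_of_dominated θ₀ hσ G hG hG0 ε hε ?_ hb
    have hae : ∀ᵐ x : ℝ, x ≠ θ₀.2.1 - θ₀.2.2 / θ₀.1 := by
      simp [ae_iff]
    filter_upwards [hae] with x hx hW
    apply hx
    unfold gW at hW
    field_simp
    linarith
end

section
/- Fix a ∈ [1/2, 1). For every x ∈ ℝ, the map θ ↦ p_θ(x)^a is continuously differentiable on the open set Θ_a = (−a/(1+a), ∞) × ℝ × (0, ∞), and each of the three partial derivatives (x, θ) ↦ ∂_{θ_k} p_θ(x)^a (k = 1, 2, 3, corresponding to γ, μ, σ) is jointly continuous on ℝ × Θ_a. In particular, at every boundary point x = μ − σ/γ (γ ≠ 0) of the support, all three partial derivatives ∂_{θ_k} p_θ(x)^a tend to 0 as (x', θ') → (x, θ) with σ' + γ'(x' − μ') > 0. -/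
open MeasureTheory Filter Set Topology

/-- `φ(t) = log (1+t) / t`, extended by `1` at `t = 0`. -/
noncomputable def gevPhi : ℝ → ℝ := dslope (fun t => Real.log (1 + t)) 0

lemma gevPhi_ne {t : ℝ} (ht : t ≠ 0) : gevPhi t = Real.log (1 + t) / t := by
  simp [gevPhi, dslope_of_ne _ ht, slope_def_field]

lemma gevPhi_zero : gevPhi 0 = 1 := by
  have h : HasDerivAt (fun t : ℝ => Real.log (1 + t)) (1 / (1 + 0)) 0 :=
    ((hasDerivAt_id (0 : ℝ)).const_add 1).log (by simp)
  rw [gevPhi, dslope_same, h.deriv]; simp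

lemma gevPhi_mul (t : ℝ) : t * gevPhi t = Real.log (1 + t) := by
  by_cases ht : t = 0
  · simp [ht]
  · rw [gevPhi_ne ht]; field_simp

lemma gevPhi_analyticAt {t : ℝ} (ht : 0 < 1 + t) : AnalyticAt ℝ gevPhi t := by
  have hl : AnalyticAt ℝ (fun t : ℝ => Real.log (1 + t)) t :=
    AnalyticAt.log (by fun_prop) ht
  by_cases h0 : t = 0
  · subst h0
    obtain ⟨p, hp⟩ := hl
    exact ⟨_, hp.has_fpower_series_dslope_fslope⟩
  · have : gevPhi =ᶠ[𝓝 t] fun t => Real.log (1 + t) / t := by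
      filter_upwards [isOpen_ne.mem_nhds h0] with s hs using gevPhi_ne hs
    exact (hl.div analyticAt_id h0).congr this.symm

lemma gevPhi_deriv {t : ℝ} (ht : 0 < 1 + t) :
    (1 + t) * (gevPhi t + t * deriv gevPhi t) = 1 := by
  have h1 : HasDerivAt (fun t => t * gevPhi t) (1 * gevPhi t + t * deriv gevPhi t) t :=
    (hasDerivAt_id t).mul (gevPhi_analyticAt ht).differentiableAt.hasDerivAt
  have h2 : HasDerivAt (fun t => t * gevPhi t) (1 / (1 + t)) t := by
    simp only [gevPhi_mul]
    exact ((hasDerivAt_id t).const_add 1).log ht.ne'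
  have := h1.unique h2
  rw [one_mul] at this
  rw [this]; field_simp

/-- normalised variable -/
noncomputable def gevZ (q : ℝ × ℝ × ℝ × ℝ) : ℝ := (q.1 - q.2.2.1) / q.2.2.2
/-- `1 + γ z` -/
noncomputable def gevW (q : ℝ × ℝ × ℝ × ℝ) : ℝ := 1 + q.2.1 * gevZ q
/-- `- log u` -/
noncomputable def gevL (q : ℝ × ℝ × ℝ × ℝ) : ℝ := gevZ q * gevPhi (q.2.1 * gevZ q)
/-- The `a`-th power of the density on the support. -/
noncomputable def gevF (a : ℝ) (q : ℝ × ℝ × ℝ × ℝ) : ℝ :=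
  Real.exp (a * (-Real.log q.2.2.2 - Real.exp (-gevL q) - (q.2.1 + 1) * gevL q))

lemma gevL_mul (q : ℝ × ℝ × ℝ × ℝ) : q.2.1 * gevL q = Real.log (gevW q) := by
  rw [gevL, gevW, ← gevPhi_mul]; ring

lemma gevU_eq_s11 (q : ℝ × ℝ × ℝ × ℝ) (hw : 0 < gevW q) :
    gevU q.2.1 (gevZ q) = Real.exp (-gevL q) := by
  unfold gevU
  split_ifs with h
  · simp [gevL, h, gevPhi_zero]
  · change (gevW q) ^ _ = _
    rw [Real.rpow_def_of_pos hw, ← gevL_mul]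
    congr 1; field_simp

lemma gevW_eq (q : ℝ × ℝ × ℝ × ℝ) (hs : 0 < q.2.2.2) :
    q.2.2.2 + q.2.1 * (q.1 - q.2.2.1) = q.2.2.2 * gevW q := by
  unfold gevW gevZ; field_simp

lemma gevDensity_pow_eq {a : ℝ} (ha : 0 < a) (x : ℝ) (θ : ℝ × ℝ × ℝ) (hs : 0 < θ.2.2) :
    gevDensity θ x ^ a = if 0 < gevW (x, θ) then gevF a (x, θ) else 0 := by
  have h := gevW_eq (x, θ) hs
  simp only at h
  unfold gevDensity
  rw [h]
  simp only [mul_pos_iff_of_pos_left hs]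
  split_ifs with hw
  · have hu := gevU_eq_s11 (x, θ) hw
    simp only [gevZ] at hu
    rw [hu, gevF, Real.mul_rpow (by positivity) (by positivity),
      Real.mul_rpow (by positivity) (by positivity), ← Real.exp_mul, ← Real.exp_mul, ← Real.exp_mul,
      Real.rpow_def_of_pos (by positivity), Real.log_inv, ← Real.exp_add, ← Real.exp_add]
    congr 1; simp only; ring
  · exact Real.zero_rpow ha.ne'

/-- Derivative on the support. -/
noncomputable def gevDpos (a : ℝ) (q : ℝ × ℝ × ℝ × ℝ) : (ℝ × ℝ × ℝ) →L[ℝ] ℝ :=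
  (a * gevF a q * ((Real.exp (-gevL q) - (q.2.1 + 1)) *
      (gevZ q ^ 2 * deriv gevPhi (q.2.1 * gevZ q)) - gevL q)) • ContinuousLinearMap.fst ℝ ℝ (ℝ × ℝ) +
  (-(a * gevF a q * (Real.exp (-gevL q) - (q.2.1 + 1)) * (gevW q)⁻¹ * (q.2.2.2)⁻¹)) •
    ((ContinuousLinearMap.fst ℝ ℝ ℝ).comp (ContinuousLinearMap.snd ℝ ℝ (ℝ × ℝ))) +
  (-(a * gevF a q * (q.2.2.2)⁻¹) - a * gevF a q * (Real.exp (-gevL q) - (q.2.1 + 1)) * (gevW q)⁻¹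
      * (q.2.2.2)⁻¹ * gevZ q) •
    ((ContinuousLinearMap.snd ℝ ℝ ℝ).comp (ContinuousLinearMap.snd ℝ ℝ (ℝ × ℝ)))

lemma gevZ_hasFDerivAt (x : ℝ) (θ : ℝ × ℝ × ℝ) (hs : 0 < θ.2.2) :
    HasFDerivAt (fun θ' => gevZ (x, θ'))
      ((-(θ.2.2)⁻¹) • ((ContinuousLinearMap.fst ℝ ℝ ℝ).comp (ContinuousLinearMap.snd ℝ ℝ (ℝ × ℝ))) +
       (-((θ.2.2)⁻¹ * gevZ (x, θ))) •
        ((ContinuousLinearMap.snd ℝ ℝ ℝ).comp (ContinuousLinearMap.snd ℝ ℝ (ℝ × ℝ)))) θ := by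
  have h2 : HasFDerivAt (fun θ' : ℝ × ℝ × ℝ => θ'.2.1)
    ((ContinuousLinearMap.fst ℝ ℝ ℝ).comp (ContinuousLinearMap.snd ℝ ℝ (ℝ × ℝ))) θ :=
    ((ContinuousLinearMap.fst ℝ ℝ ℝ).comp (ContinuousLinearMap.snd ℝ ℝ (ℝ × ℝ))).hasFDerivAt
  have h3 : HasFDerivAt (fun θ' : ℝ × ℝ × ℝ => θ'.2.2)
    ((ContinuousLinearMap.snd ℝ ℝ ℝ).comp (ContinuousLinearMap.snd ℝ ℝ (ℝ × ℝ))) θ :=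
    ((ContinuousLinearMap.snd ℝ ℝ ℝ).comp (ContinuousLinearMap.snd ℝ ℝ (ℝ × ℝ))).hasFDerivAt
  have h4 := (h2.const_sub x).mul ((hasDerivAt_inv hs.ne').comp_hasFDerivAt θ h3)
  refine h4.congr_fderiv ?_
  ext <;> simp [gevZ] <;> field_simp

lemma gevF_hasFDerivAt (a x : ℝ) (θ : ℝ × ℝ × ℝ) (hs : 0 < θ.2.2) (hw : 0 < gevW (x, θ)) :
    HasFDerivAt (fun θ' => gevF a (x, θ')) (gevDpos a (x, θ)) θ := by
  have hz := gevZ_hasFDerivAt x θ hs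
  have h1 : HasFDerivAt (fun θ' : ℝ × ℝ × ℝ => θ'.1) (ContinuousLinearMap.fst ℝ ℝ (ℝ × ℝ)) θ :=
    (ContinuousLinearMap.fst ℝ ℝ (ℝ × ℝ)).hasFDerivAt
  have h3 : HasFDerivAt (fun θ' : ℝ × ℝ × ℝ => θ'.2.2)
    ((ContinuousLinearMap.snd ℝ ℝ ℝ).comp (ContinuousLinearMap.snd ℝ ℝ (ℝ × ℝ))) θ :=
    ((ContinuousLinearMap.snd ℝ ℝ ℝ).comp (ContinuousLinearMap.snd ℝ ℝ (ℝ × ℝ))).hasFDerivAt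
  have hp : HasDerivAt gevPhi (deriv gevPhi (θ.1 * gevZ (x, θ))) (θ.1 * gevZ (x, θ)) :=
    (gevPhi_analyticAt hw).differentiableAt.hasDerivAt
  have hd := gevPhi_deriv hw
  change gevW (x, θ) * (gevPhi (θ.1 * gevZ (x, θ)) +
    θ.1 * gevZ (x, θ) * deriv gevPhi (θ.1 * gevZ (x, θ))) = 1 at hd
  have hL : HasFDerivAt (fun θ' => gevL (x, θ')) _ θ :=
    hz.mul (hp.comp_hasFDerivAt θ (h1.mul hz))
  have hG := (((h3.log hs.ne').neg.sub hL.neg.exp).sub ((h1.add_const 1).mul hL)).const_mul a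
  have hE : HasFDerivAt (fun θ' => gevF a (x, θ')) (gevF a (x, θ) • _) θ := hG.exp
  refine hE.congr_fderiv ?_
  have hd' : (gevW (x, θ))⁻¹ = (gevPhi (θ.1 * gevZ (x, θ)) +
    θ.1 * gevZ (x, θ) * deriv gevPhi (θ.1 * gevZ (x, θ))) := by
    field_simp; linarith
  have hL' : gevL (x, θ) = gevZ (x, θ) * gevPhi (θ.1 * gevZ (x, θ)) := rfl
  rw [gevDpos, hd']
  simp only [Pi.neg_apply]
  generalize Real.exp (-gevL (x, θ)) = U
  generalize gevF a (x, θ) = E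
  rw [hL']
  generalize deriv gevPhi (θ.1 * gevZ (x, θ)) = P
  generalize gevPhi (θ.1 * gevZ (x, θ)) = Q
  generalize gevZ (x, θ) = Z
  clear hE hG hL hL' hd' hd hp hz
  ext <;> simp <;> ring

lemma gevZ_continuousAt (q : ℝ × ℝ × ℝ × ℝ) (hs : 0 < q.2.2.2) : ContinuousAt gevZ q := by
  unfold gevZ
  exact ContinuousAt.div (by fun_prop) (by fun_prop) hs.ne'

lemma gevW_continuousAt (q : ℝ × ℝ × ℝ × ℝ) (hs : 0 < q.2.2.2) : ContinuousAt gevW q := by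
  have := gevZ_continuousAt q hs
  unfold gevW
  fun_prop

lemma gevDpos_continuousAt (a : ℝ) (q : ℝ × ℝ × ℝ × ℝ) (hs : 0 < q.2.2.2) (hw : 0 < gevW q) :
    ContinuousAt (gevDpos a) q := by
  have hz := gevZ_continuousAt q hs
  have hW := gevW_continuousAt q hs
  have ht : ContinuousAt (fun q : ℝ × ℝ × ℝ × ℝ => q.2.1 * gevZ q) q := by fun_prop
  have hp : ContinuousAt (fun q : ℝ × ℝ × ℝ × ℝ => gevPhi (q.2.1 * gevZ q)) q :=
    ContinuousAt.comp (f := fun q : ℝ × ℝ × ℝ × ℝ => q.2.1 * gevZ q)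
      (gevPhi_analyticAt hw).continuousAt ht
  have hp' : ContinuousAt (fun q : ℝ × ℝ × ℝ × ℝ => deriv gevPhi (q.2.1 * gevZ q)) q :=
    ContinuousAt.comp (f := fun q : ℝ × ℝ × ℝ × ℝ => q.2.1 * gevZ q)
      (gevPhi_analyticAt hw).deriv.continuousAt ht
  have hL : ContinuousAt gevL q := hz.mul hp
  have hl : ContinuousAt (fun q : ℝ × ℝ × ℝ × ℝ => Real.log q.2.2.2) q :=
    ContinuousAt.log (by fun_prop) hs.ne'
  have hF : ContinuousAt (gevF a) q := by unfold gevF; fun_prop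
  have hWi : ContinuousAt (fun q => (gevW q)⁻¹) q := hW.inv₀ hw.ne'
  have hsi : ContinuousAt (fun q : ℝ × ℝ × ℝ × ℝ => (q.2.2.2)⁻¹) q :=
    ContinuousAt.inv₀ (by fun_prop) hs.ne'
  unfold gevDpos
  fun_prop

/-- Exponential decay beats every power at infinity. -/
lemma gev_decay {ι : Type*} {l : Filter ι} {u L e : ι → ℝ} {a e0 : ℝ} (ha : 0 < a)
    (huL : ∀ i, u i = Real.exp (-L i)) (hL : Tendsto L l atBot) (he : Tendsto e l (𝓝 e0)) :
    Tendsto (fun i => Real.exp (-a * u i - e i * L i)) l (𝓝 0) := by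
  have hn : Tendsto (fun i => -L i) l atTop := tendsto_neg_atBot_atTop.comp hL
  have hu : Tendsto u l atTop := by
    have : u = fun i => Real.exp (-L i) := funext huL
    rw [this]; exact Real.tendsto_exp_atTop.comp hn
  have hr : Tendsto (fun i => (-L i) / u i) l (𝓝 0) := by
    have h0 := (Real.tendsto_pow_mul_exp_neg_atTop_nhds_zero 1).comp hn
    refine h0.congr fun i => ?_
    simp [huL, Real.exp_neg, div_eq_mul_inv]
  have h1 : Tendsto (fun i => -a + e i * ((-L i) / u i)) l (𝓝 (-a + e0 * 0)) :=
    (he.mul hr).const_add _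
  have h2 : Tendsto (fun i => u i * (-a + e i * ((-L i) / u i))) l atBot :=
    hu.atTop_mul_neg (by linarith) h1
  refine (Real.tendsto_exp_atBot.comp h2).congr fun i => ?_
  have : u i ≠ 0 := by rw [huL]; positivity
  simp only [Function.comp]
  congr 1; field_simp; ring

lemma gev_lim {a : ℝ} (ha : 0 < a) (q : ℝ × ℝ × ℝ × ℝ) (hγ : -(a / (1 + a)) < q.2.1)
    (hs : 0 < q.2.2.2) (hw : gevW q = 0) :
    Tendsto (fun q => gevF a q * (gevW q)⁻¹) (𝓝[{q | 0 < gevW q}] q) (𝓝 0) ∧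
    Tendsto (fun q => gevF a q * (gevW q)⁻¹ * Real.exp (-gevL q))
      (𝓝[{q | 0 < gevW q}] q) (𝓝 0) := by
  set l := 𝓝[{q | 0 < gevW q}] q with hl
  have hγ0 : q.2.1 ≠ 0 := by
    intro h; simp [gevW, h] at hw
  have hW : Tendsto gevW l (𝓝[>] 0) := by
    refine tendsto_nhdsWithin_iff.2 ⟨?_, self_mem_nhdsWithin⟩
    have := (gevW_continuousAt q hs).tendsto.mono_left (nhdsWithin_le_nhds (s := {q | 0 < gevW q}))
    rwa [hw] at this
  have hlog : Tendsto (fun q => Real.log (gevW q)) l atBot :=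
    Real.tendsto_log_nhdsGT_zero.comp hW
  have hg : Tendsto (fun q : ℝ × ℝ × ℝ × ℝ => q.2.1) l (𝓝 q.2.1) :=
    (by fun_prop : ContinuousAt (fun q : ℝ × ℝ × ℝ × ℝ => q.2.1) q).tendsto.mono_left
      nhdsWithin_le_nhds
  have hne : ∀ᶠ p : ℝ × ℝ × ℝ × ℝ in l, p.2.1 ≠ 0 := hg.eventually_ne hγ0
  have hLeq : (fun q : ℝ × ℝ × ℝ × ℝ => Real.log (gevW q) * (q.2.1)⁻¹) =ᶠ[l] gevL := by
    filter_upwards [hne] with p hp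
    rw [← gevL_mul]; field_simp
  have hσ : Tendsto (fun q : ℝ × ℝ × ℝ × ℝ => Real.exp (-a * Real.log q.2.2.2)) l
      (𝓝 (Real.exp (-a * Real.log q.2.2.2))) := by
    have h0 : ContinuousAt (fun q : ℝ × ℝ × ℝ × ℝ => Real.log q.2.2.2) q :=
      ContinuousAt.log (by fun_prop) hs.ne'
    have : ContinuousAt (fun q : ℝ × ℝ × ℝ × ℝ => Real.exp (-a * Real.log q.2.2.2)) q := by fun_prop
    exact this.tendsto.mono_left nhdsWithin_le_nhds
  have he : Tendsto (fun q : ℝ × ℝ × ℝ × ℝ => a * (q.2.1 + 1) + q.2.1) l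
      (𝓝 (a * (q.2.1 + 1) + q.2.1)) := ((hg.add_const 1).const_mul a).add hg
  have hKeq : ∀ᶠ p in l, Real.exp (-a * Real.log p.2.2.2) *
      Real.exp (-a * Real.exp (-gevL p) - (a * (p.2.1 + 1) + p.2.1) * gevL p)
        = gevF a p * (gevW p)⁻¹ := by
    filter_upwards [self_mem_nhdsWithin] with p hp
    have : (gevW p)⁻¹ = Real.exp (-(p.2.1 * gevL p)) := by
      rw [gevL_mul, Real.exp_neg, Real.exp_log hp]
    rw [this, gevF, ← Real.exp_add, ← Real.exp_add]
    congr 1; ring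
  rcases lt_or_gt_of_ne hγ0 with h | h
  · have hL : Tendsto gevL l atTop :=
      (hlog.atBot_mul_neg (inv_lt_zero.2 h) (hg.inv₀ hγ0)).congr' hLeq
    have hu : Tendsto (fun p => Real.exp (-gevL p)) l (𝓝 0) :=
      Real.tendsto_exp_atBot.comp (tendsto_neg_atTop_atBot.comp hL)
    have hpos : 0 < a * (q.2.1 + 1) + q.2.1 := by
      have h1 : 0 < 1 + a := by linarith
      have : -a < q.2.1 * (1 + a) := by
        rw [← neg_div, div_lt_iff₀ h1] at hγ; exact hγ
      linarith
    have hx : Tendsto (fun p => Real.exp (-a * Real.exp (-gevL p) -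
        (a * (p.2.1 + 1) + p.2.1) * gevL p)) l (𝓝 0) := by
      refine Real.tendsto_exp_atBot.comp ?_
      have h1 := tendsto_neg_atTop_atBot.comp (he.pos_mul_atTop hpos hL)
      have := (hu.const_mul (-a)).add_atBot h1
      refine this.congr fun p => ?_
      simp [sub_eq_add_neg]
    have hK : Tendsto (fun q => gevF a q * (gevW q)⁻¹) l (𝓝 0) := by
      have := (hσ.mul hx).congr' hKeq
      rwa [mul_zero] at this
    exact ⟨hK, by simpa using hK.mul hu⟩
  · have hL : Tendsto gevL l atBot :=
      (hlog.atBot_mul_pos (inv_pos.2 h) (hg.inv₀ hγ0)).congr' hLeq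
    constructor
    · have := (hσ.mul (gev_decay (u := fun p => Real.exp (-gevL p)) ha (fun _ => rfl) hL he)).congr'
        hKeq
      rwa [mul_zero] at this
    · have h1 := hσ.mul (gev_decay (u := fun p => Real.exp (-gevL p)) ha (fun _ => rfl) hL
        (he.add_const 1))
      rw [mul_zero] at h1
      refine h1.congr' ?_
      filter_upwards [hKeq] with p hp
      rw [← hp]
      simp only [← Real.exp_add]
      congr 1; ring

lemma gevDpos_lim {a : ℝ} (ha : 0 < a) (q : ℝ × ℝ × ℝ × ℝ) (hγ : -(a / (1 + a)) < q.2.1)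
    (hs : 0 < q.2.2.2) (hw : gevW q = 0) :
    Tendsto (gevDpos a) (𝓝[{q | 0 < gevW q}] q) (𝓝 0) := by
  obtain ⟨hK, hKu⟩ := gev_lim ha q hγ hs hw
  set l := 𝓝[{q | 0 < gevW q}] q with hl
  have hW : Tendsto gevW l (𝓝[>] 0) := by
    refine tendsto_nhdsWithin_iff.2 ⟨?_, self_mem_nhdsWithin⟩
    have := (gevW_continuousAt q hs).tendsto.mono_left (nhdsWithin_le_nhds (s := {q | 0 < gevW q}))
    rwa [hw] at this
  have hW0 : Tendsto gevW l (𝓝 0) := hW.mono_right nhdsWithin_le_nhds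
  have hg : Tendsto (fun q : ℝ × ℝ × ℝ × ℝ => q.2.1) l (𝓝 q.2.1) :=
    (by fun_prop : ContinuousAt (fun q : ℝ × ℝ × ℝ × ℝ => q.2.1) q).tendsto.mono_left
      nhdsWithin_le_nhds
  have hsi : Tendsto (fun q : ℝ × ℝ × ℝ × ℝ => (q.2.2.2)⁻¹) l (𝓝 (q.2.2.2)⁻¹) :=
    (ContinuousAt.inv₀ (by fun_prop) hs.ne' :
      ContinuousAt (fun q : ℝ × ℝ × ℝ × ℝ => (q.2.2.2)⁻¹) q).tendsto.mono_left nhdsWithin_le_nhds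
  have hz : Tendsto gevZ l (𝓝 (gevZ q)) :=
    (gevZ_continuousAt q hs).tendsto.mono_left nhdsWithin_le_nhds
  have ht : Tendsto (fun p : ℝ × ℝ × ℝ × ℝ => p.2.1 * gevZ p) l (𝓝 (-1)) := by
    have := hg.mul hz
    rwa [show q.2.1 * gevZ q = -1 by unfold gevW at hw; linarith] at this
  have hti := ht.inv₀ (by norm_num)
  have htne : ∀ᶠ p : ℝ × ℝ × ℝ × ℝ in l, p.2.1 * gevZ p ≠ 0 := ht.eventually_ne (by norm_num)
  have hwlog : Tendsto (fun p => gevW p * Real.log (gevW p)) l (𝓝 0) := by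
    have := Real.continuous_mul_log.tendsto 0 |>.comp hW0
    simp only [zero_mul] at this
    exact this
  have hph : Tendsto (fun p => gevW p * gevPhi (p.2.1 * gevZ p)) l (𝓝 0) := by
    have := hwlog.mul hti
    rw [zero_mul] at this
    refine this.congr' ?_
    filter_upwards [htne] with p hp
    rw [gevPhi_ne hp]; rw [gevW]; field_simp
  have hph' : Tendsto (fun p => gevW p * deriv gevPhi (p.2.1 * gevZ p)) l
      (𝓝 ((1 - 0) * (-1)⁻¹)) := by
    refine ((hph.const_sub 1).mul hti).congr' ?_
    filter_upwards [htne, self_mem_nhdsWithin] with p hp hp2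
    have := gevPhi_deriv (t := p.2.1 * gevZ p) hp2
    change gevW p * _ = 1 at this
    rw [← div_eq_mul_inv, div_eq_iff hp]
    linarith
  have hc : Tendsto (fun p => gevF a p * (gevW p)⁻¹ * Real.exp (-gevL p) -
      gevF a p * (gevW p)⁻¹ * (p.2.1 + 1)) l (𝓝 0) := by
    have := hKu.sub (hK.mul (hg.add_const 1)); simpa using this
  have hF : Tendsto (gevF a) l (𝓝 0) := by
    have := hK.mul hW0
    rw [mul_zero] at this
    refine this.congr' ?_
    filter_upwards [self_mem_nhdsWithin] with p hp
    have : gevW p ≠ 0 := ne_of_gt hp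
    field_simp
  have c1 : Tendsto (fun q => (a * gevF a q * ((Real.exp (-gevL q) - (q.2.1 + 1)) *
      (gevZ q ^ 2 * deriv gevPhi (q.2.1 * gevZ q)) - gevL q))) l (𝓝 0) := by
    have := ((hc.mul ((hz.pow 2).mul hph')).sub (hK.mul (hz.mul hph))).const_mul a
    simp only [zero_mul, sub_zero, mul_zero] at this
    refine this.congr' ?_
    filter_upwards [self_mem_nhdsWithin] with p hp
    have : gevW p ≠ 0 := ne_of_gt hp
    rw [gevL]
    field_simp
  have c2 : Tendsto (fun q => (-(a * gevF a q * (Real.exp (-gevL q) - (q.2.1 + 1)) * (gevW q)⁻¹ *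
      (q.2.2.2)⁻¹))) l (𝓝 0) := by
    have := ((hc.mul hsi).const_mul a).neg
    simp only [zero_mul, mul_zero, neg_zero] at this
    refine this.congr fun p => ?_
    ring
  have c3 : Tendsto (fun q => (-(a * gevF a q * (q.2.2.2)⁻¹) - a * gevF a q *
      (Real.exp (-gevL q) - (q.2.1 + 1)) * (gevW q)⁻¹ * (q.2.2.2)⁻¹ * gevZ q)) l (𝓝 0) := by
    have := (((hF.mul hsi).const_mul a).neg).add (c2.mul hz)
    simp only [zero_mul, mul_zero, neg_zero, add_zero] at this
    refine this.congr fun p => ?_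
    ring
  have := ((c1.smul_const (ContinuousLinearMap.fst ℝ ℝ (ℝ × ℝ))).add (c2.smul_const
    ((ContinuousLinearMap.fst ℝ ℝ ℝ).comp (ContinuousLinearMap.snd ℝ ℝ (ℝ × ℝ))))).add
    (c3.smul_const ((ContinuousLinearMap.snd ℝ ℝ ℝ).comp (ContinuousLinearMap.snd ℝ ℝ (ℝ × ℝ))))
  simp only [zero_smul, add_zero] at this
  exact this

open Classical in
/-- Extending by zero a function tending to zero within a set. -/
lemma gev_tendsto_ite {E F : Type*} [TopologicalSpace E] [TopologicalSpace F] [Zero F]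
    {g : E → F} {w : E → ℝ} {q : E} (h : Tendsto g (𝓝[{q | 0 < w q}] q) (𝓝 0)) :
    Tendsto (fun p => if 0 < w p then g p else 0) (𝓝 q) (𝓝 0) := by
  refine Tendsto.if h ?_
  exact tendsto_const_nhds

/-- The derivative. -/
noncomputable def gevD (a : ℝ) (q : ℝ × ℝ × ℝ × ℝ) : (ℝ × ℝ × ℝ) →L[ℝ] ℝ :=
  if 0 < gevW q then gevDpos a q else 0

lemma gevD_continuousAt {a : ℝ} (ha : 0 < a) (q : ℝ × ℝ × ℝ × ℝ) (hγ : -(a / (1 + a)) < q.2.1)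
    (hs : 0 < q.2.2.2) : ContinuousAt (gevD a) q := by
  have hW := gevW_continuousAt q hs
  rcases lt_trichotomy (gevW q) 0 with h | h | h
  · have : gevD a =ᶠ[𝓝 q] fun _ => 0 := by
      filter_upwards [hW.eventually_lt_const h] with p hp
      simp [gevD, hp.le]
    exact continuousAt_const.congr this.symm
  · have h0 : gevD a q = 0 := by simp [gevD, h]
    rw [ContinuousAt, h0]
    have := gev_tendsto_ite (gevDpos_lim ha q hγ hs h)
    refine this.congr fun p => ?_
    simp [gevD]
  · have : gevD a =ᶠ[𝓝 q] gevDpos a := by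
      filter_upwards [hW.eventually_const_lt h] with p hp
      simp [gevD, hp]
    exact (gevDpos_continuousAt a q hs h).congr this.symm

lemma gevD_hasFDerivAt {a : ℝ} (ha : 0 < a) (x : ℝ) (θ : ℝ × ℝ × ℝ) (hγ : -(a / (1 + a)) < θ.1)
    (hs : 0 < θ.2.2) :
    HasFDerivAt (fun θ' : ℝ × ℝ × ℝ => gevDensity θ' x ^ a) (gevD a (x, θ)) θ := by
  have hev : (fun θ' : ℝ × ℝ × ℝ => gevDensity θ' x ^ a) =ᶠ[𝓝 θ]
      fun θ' => if 0 < gevW (x, θ') then gevF a (x, θ') else 0 := by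
    have : ContinuousAt (fun θ' : ℝ × ℝ × ℝ => θ'.2.2) θ := by fun_prop
    filter_upwards [this.eventually_const_lt hs] with p hp using gevDensity_pow_eq ha x p hp
  refine HasFDerivAt.congr_of_eventuallyEq ?_ hev
  have hc : ContinuousAt (fun θ' : ℝ × ℝ × ℝ => (x, θ')) θ := by fun_prop
  have hW : ContinuousAt (fun θ' => gevW (x, θ')) θ :=
    ContinuousAt.comp (f := fun θ' : ℝ × ℝ × ℝ => (x, θ')) (gevW_continuousAt (x, θ) hs) hc
  rcases lt_trichotomy (gevW (x, θ)) 0 with h | h | h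
  · have h0 : gevD a (x, θ) = 0 := by simp [gevD, h.le]
    rw [h0]
    refine (hasFDerivAt_const (0 : ℝ) θ).congr_of_eventuallyEq ?_
    filter_upwards [hW.eventually_lt_const h] with p hp
    simp [hp.le]
  · have h0 : gevD a (x, θ) = 0 := by simp [gevD, h]
    rw [h0]
    have hK := (gev_tendsto_ite (gev_lim ha (x, θ) hγ hs h).1).comp hc.tendsto
    have hWd : HasFDerivAt (fun θ' => gevW (x, θ')) _ θ :=
      ((hasFDerivAt_fst (𝕜 := ℝ) (p := θ)).mul (gevZ_hasFDerivAt x θ hs)).const_add 1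
    have hO := hWd.isBigO_sub.norm_right
    have ho := ((Asymptotics.isLittleO_one_iff ℝ).2 hK).mul_isBigO hO
    rw [hasFDerivAt_iff_isLittleO]
    refine (ho.congr' ?_ ?_ ).trans_isBigO (Asymptotics.isBigO_refl (fun p => p - θ) (𝓝 θ)).norm_left
    · refine Eventually.of_forall fun p => ?_
      simp only [Function.comp, h, lt_irrefl, if_false, sub_zero, ContinuousLinearMap.zero_apply]
      split_ifs with hp
      · field_simp
      · simp
    · exact Eventually.of_forall fun p => one_mul _
  · have h0 : gevD a (x, θ) = gevDpos a (x, θ) := by simp [gevD, h]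
    rw [h0]
    refine (gevF_hasFDerivAt a x θ hs h).congr_of_eventuallyEq ?_
    filter_upwards [hW.eventually_const_lt h] with p hp
    simp [hp]

/-- **Continuous differentiability of `θ ↦ p_θ(x)^a`** for fixed `a ∈ [1/2, 1)`:
for every `x` the map is continuously differentiable on
`Θ_a = (−a/(1+a), ∞) × ℝ × (0, ∞)`, with derivative jointly continuous in `(x, θ)`;
in particular at every boundary point `x = μ − σ/γ` (`γ ≠ 0`) of the support the
derivative tends to `0` when approached from within the support. -/
theorem gev_density_pow_contDiff (a : ℝ) (ha1 : 1 / 2 ≤ a) (ha2 : a < 1) :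
    ∃ D : ℝ → (ℝ × ℝ × ℝ) → ((ℝ × ℝ × ℝ) →L[ℝ] ℝ),
      (∀ (x : ℝ) (θ : ℝ × ℝ × ℝ), -(a / (1 + a)) < θ.1 → 0 < θ.2.2 →
        HasFDerivAt (fun θ' : ℝ × ℝ × ℝ => gevDensity θ' x ^ a) (D x θ) θ) ∧
      ContinuousOn (fun q : ℝ × (ℝ × ℝ × ℝ) => D q.1 q.2)
        {q : ℝ × (ℝ × ℝ × ℝ) | -(a / (1 + a)) < q.2.1 ∧ 0 < q.2.2.2} ∧
      (∀ θ : ℝ × ℝ × ℝ, -(a / (1 + a)) < θ.1 → 0 < θ.2.2 → θ.1 ≠ 0 →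
        Filter.Tendsto (fun q : ℝ × (ℝ × ℝ × ℝ) => D q.1 q.2)
          (nhdsWithin (θ.2.1 - θ.2.2 / θ.1, θ)
            {q : ℝ × (ℝ × ℝ × ℝ) | 0 < q.2.2.2 + q.2.1 * (q.1 - q.2.2.1)})
          (nhds 0)) := by
  have ha : 0 < a := by linarith
  refine ⟨fun x θ => gevD a (x, θ), fun x θ h1 h2 => gevD_hasFDerivAt ha x θ h1 h2,
    fun q hq => (gevD_continuousAt ha q hq.1 hq.2).continuousWithinAt, ?_⟩
  intro θ h1 h2 h3
  have hw : gevW (θ.2.1 - θ.2.2 / θ.1, θ) = 0 := by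
    simp only [gevW, gevZ]; field_simp; ring
  have h0 : gevD a (θ.2.1 - θ.2.2 / θ.1, θ) = 0 := by simp [gevD, hw]
  have := (gevD_continuousAt ha (θ.2.1 - θ.2.2 / θ.1, θ) h1 h2).tendsto
  rw [h0] at this
  exact this.mono_left nhdsWithin_le_nhds
end
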